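/- Let t be a positive integer coprime to 6 and δ_t with 0 < δ_t < t, 24·δ_t ≡ 1 (mod t). If there exists m ≥ 0 with p(tm + δ_t) odd, then the smallest such m satisfies m < (t/24)·∏_{p | t, p prime} p. -/

import Mathlib

/-- The partition function: the number of partitions of `n`. -/
def partitionFn (n : ℕ) : ℕ := Fintype.card (Nat.Partition n)

/-!
The function `J = E₄ / η ^ 8`, a cube root of the `j`-invariant, has the `q`-expansion
`q ^ (-1 / 3) * E₄ * (∑ p(n) q ^ n) ^ 8`, which modulo `2` is `q ^ (-1 / 3) * ∑ p(n) q ^ (8 * n)`.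
In the trace `f(z) = ∑ J((z + 3 * b) / t)` over `b` modulo `t` only the exponents with
`t ∣ 24 * n - 1` survive, that is, `n = t * m + δ`.

Let `r` be the product of the primes dividing `t`. The cube of `f` is invariant under `Γ₀(r)`, so
that its conjugates under `SL(2, ℤ)` form a finite set. All of them have a pole of order at most
`3 * t ^ 2` in `x = q ^ (1 / (3 * t))`, and those at the cusps whose denominator shares a prime with
`t` have none; at most `r` conjugates remain.

Reduce the coefficients, which are algebraic integers, modulo a prime above `2`. The product of the
conjugates that do not vanish there is the reduction of an elementary symmetric polynomial of all
the conjugates, which is a function of level one. Subtracting powers of `j`, one sees that such a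
function vanishes modulo a prime as soon as its expansion up to the constant term does. Hence the
orders of the nonvanishing conjugates add up to at most `0`, and the zero
`3 * (24 * (t * m + δ) - 1)` of `f ^ 3`, for the least `m` with `p(t * m + δ)` odd, is bounded by
the poles `3 * t ^ 2 * r`.
-/

namespace PartitionParity

open UpperHalfPlane Function.Periodic PowerSeries Finset Filter Topology
open UniqueFactorizationMonoid (radical)
open scoped Manifold MatrixGroups ArithmeticFunction.sigma ModularForm

/-! ### The parameters `q ^ (1 / h)` -/

lemma qParam_add (h : ℝ) (z w : ℂ) : qParam h (z + w) = qParam h z * qParam h w := by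
  simp [qParam, ← Complex.exp_add, mul_add, add_div]

lemma qParam_natCast_mul (h : ℝ) (n : ℕ) (z : ℂ) : qParam h (n * z) = qParam h z ^ n := by
  rw [qParam, qParam, ← Complex.exp_nat_mul]
  ring_nf

lemma qParam_natCast_mul_pow {n : ℕ} (hn : n ≠ 0) (h : ℝ) (z : ℂ) :
    qParam (n * h) z ^ n = qParam h z := by
  have : (n : ℂ) ≠ 0 := Nat.cast_ne_zero.2 hn
  rw [← qParam_natCast_mul, qParam, qParam, Complex.ofReal_mul, Complex.ofReal_natCast,
    mul_left_comm, mul_div_mul_left _ _ this]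

lemma qParam_intCast_eq_one_iff {N : ℕ} (hN : N ≠ 0) {k : ℤ} : qParam N k = 1 ↔ (N : ℤ) ∣ k := by
  have hN' : (N : ℂ) ≠ 0 := Nat.cast_ne_zero.2 hN
  have hpi := Complex.two_pi_I_ne_zero
  rw [qParam, Complex.exp_eq_one_iff, Complex.ofReal_natCast]
  refine exists_congr fun m ↦ ?_
  rw [mul_comm, mul_div_right_comm, mul_left_inj' hpi, div_eq_iff hN', mul_comm]
  exact_mod_cast Iff.rfl

/-! ### Power series evaluated at complex numbers -/

section EvalsTo

variable {R : Type*} [CommRing R] [Algebra R ℂ]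

/-- `EvalsTo P x v`: the power series `P`, with its coefficients mapped to `ℂ`, converges at `x`
with sum `v`. Keeping the coefficients in `R` makes it possible to reduce them modulo an ideal. -/
def EvalsTo (P : R⟦X⟧) (x v : ℂ) : Prop :=
  HasSum (fun n ↦ algebraMap R ℂ (P.coeff n) * x ^ n) v

namespace EvalsTo

variable {P Q : R⟦X⟧} {x v w : ℂ}

lemma add (hP : EvalsTo P x v) (hQ : EvalsTo Q x w) : EvalsTo (P + Q) x (v + w) := by
  simpa [EvalsTo, add_mul] using HasSum.add hP hQ

lemma sub (hP : EvalsTo P x v) (hQ : EvalsTo Q x w) : EvalsTo (P - Q) x (v - w) := by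
  simpa [EvalsTo, sub_mul] using HasSum.sub hP hQ

lemma mul (hP : EvalsTo P x v) (hQ : EvalsTo Q x w) : EvalsTo (P * Q) x (v * w) := by
  have hP' := summable_norm_iff.2 (HasSum.summable hP)
  have hQ' := summable_norm_iff.2 (HasSum.summable hQ)
  have hs := (summable_norm_sum_mul_antidiagonal_of_summable_norm hP' hQ').of_norm.hasSum
  rw [← tsum_mul_tsum_eq_tsum_sum_antidiagonal_of_summable_norm hP' hQ',
    HasSum.tsum_eq hP, HasSum.tsum_eq hQ] at hs
  refine hs.congr_fun fun n ↦ ?_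
  rw [coeff_mul, map_sum, sum_mul]
  refine sum_congr rfl fun ij hij ↦ ?_
  rw [← mem_antidiagonal.1 hij, map_mul, pow_add]
  ring

lemma monomial (n : ℕ) (a : R) (x : ℂ) :
    EvalsTo (PowerSeries.monomial n a) x (algebraMap R ℂ a * x ^ n) := by
  unfold EvalsTo
  convert! hasSum_ite_eq n (algebraMap R ℂ a * x ^ n) using 2 with k
  rw [coeff_monomial]
  split_ifs with hk <;> simp [hk]

lemma const (a : R) (x : ℂ) : EvalsTo (C a) x (algebraMap R ℂ a) := by
  simpa using monomial 0 a x

lemma one (x : ℂ) : EvalsTo (1 : R⟦X⟧) x 1 := by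
  simpa using const (1 : R) x

lemma X_pow (n : ℕ) (x : ℂ) : EvalsTo ((X : R⟦X⟧) ^ n) x (x ^ n) := by
  simpa [X_pow_eq] using monomial n (1 : R) x

lemma pow (hP : EvalsTo P x v) (n : ℕ) : EvalsTo (P ^ n) x (v ^ n) := by
  induction n with
  | zero => simpa using one x
  | succ n ih => simpa [pow_succ] using ih.mul hP

lemma sum {ι : Type*} {s : Finset ι} {P : ι → R⟦X⟧} {v : ι → ℂ}
    (h : ∀ i ∈ s, EvalsTo (P i) x (v i)) : EvalsTo (∑ i ∈ s, P i) x (∑ i ∈ s, v i) := by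
  simpa [EvalsTo, sum_mul] using hasSum_sum h

lemma prod {ι : Type*} {s : Finset ι} {P : ι → R⟦X⟧} {v : ι → ℂ}
    (h : ∀ i ∈ s, EvalsTo (P i) x (v i)) : EvalsTo (∏ i ∈ s, P i) x (∏ i ∈ s, v i) := by
  classical
  induction s using Finset.induction_on with
  | empty => simpa using one x
  | insert i s hi ih =>
    rw [prod_insert hi, prod_insert hi]
    exact (h i (mem_insert_self i s)).mul (ih fun j hj ↦ h j (mem_insert_of_mem hj))

lemma map {S : Type*} [CommRing S] [Algebra S ℂ] (f : R →+* S)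
    (hf : (algebraMap S ℂ).comp f = algebraMap R ℂ) (hP : EvalsTo P x v) :
    EvalsTo (P.map f) x v := by
  simpa [EvalsTo, ← hf] using hP

lemma map_algebraMap (hP : EvalsTo P x v) : EvalsTo (P.map (algebraMap R ℂ)) x v :=
  hP.map _ (RingHom.id_comp _)

lemma expand {k : ℕ} (hk : k ≠ 0) (h : EvalsTo P (x ^ k) v) : EvalsTo (P.expand k hk) x v := by
  rw [EvalsTo, ← (mul_right_injective₀ hk).hasSum_iff fun n hn ↦ ?_]
  · simpa [EvalsTo, Function.comp_def, coeff_expand_mul, pow_mul] using h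
  · rw [coeff_expand_of_not_dvd _ _ _ fun ⟨m, hm⟩ ↦ hn ⟨m, hm.symm⟩, map_zero, zero_mul]

lemma rescale {c : R} (h : EvalsTo P (algebraMap R ℂ c * x) v) :
    EvalsTo (P.rescale c) x v := by
  simpa [EvalsTo, coeff_rescale, mul_pow, mul_left_comm, mul_assoc] using h

lemma of_X_mul (hx : x ≠ 0) (h : EvalsTo (X * P) x (v * x)) : EvalsTo P x v := by
  rw [EvalsTo, ← hasSum_mul_right_iff hx]
  simpa [pow_succ, mul_assoc, ← mul_assoc, coeff_succ_X_mul] using (hasSum_nat_add_iff' 1).2 h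

end EvalsTo

section QExpansion

variable {P Q : R⟦X⟧} {f : ℍ → ℂ} {h : ℝ}

lemma EvalsTo.unique [FaithfulSMul R ℂ] (hh : 0 < h)
    (hP : ∀ z : ℍ, EvalsTo P (qParam h z) (f z))
    (hQ : ∀ z : ℍ, EvalsTo Q (qParam h z) (f z)) : P = Q := by
  have hcusp : UpperHalfPlane.cuspFunction h 0 = 0 := by
    simpa [UpperHalfPlane.cuspFunction, Function.Periodic.cuspFunction]
      using! (tendsto_const_nhds.mono_left nhdsWithin_le_nhds).limUnder_eq
  have hball := hasFPowerSeriesOnBall_cuspFunction (f := 0) hh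
    (by rw [hcusp]; exact analyticAt_const) fun z ↦ by simpa [EvalsTo] using (hP z).sub (hQ z)
  rw [hcusp] at hball
  ext n
  have hn : algebraMap R ℂ (P.coeff n) - algebraMap R ℂ (Q.coeff n) = 0 :=
    congrFun ((FormalMultilinearSeries.ofScalars_series_eq_zero ℂ).1
      hball.hasFPowerSeriesAt.eq_zero) n
  exact FaithfulSMul.algebraMap_injective R ℂ (sub_eq_zero.1 hn)

lemma differentiableOn_tsum_mul_pow {c : ℕ → ℂ}
    (hc : ∀ q : ℂ, ‖q‖ < 1 → Summable fun n ↦ c n * q ^ n) :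
    DifferentiableOn ℂ (fun q ↦ ∑' n, c n * q ^ n) (Metric.ball 0 1) := by
  have hradius : 1 ≤ (FormalMultilinearSeries.ofScalars ℂ c).radius := by
    refine le_of_forall_lt_imp_le_of_dense fun r hr ↦ ?_
    lift r to NNReal using hr.ne_top
    apply FormalMultilinearSeries.le_radius_of_summable
    simpa [smul_eq_mul, norm_mul, mul_comm, mul_left_comm, mul_assoc] using
      (hc r (by simpa using hr)).norm
  have hball := ((FormalMultilinearSeries.ofScalars ℂ c).hasFPowerSeriesOnBall
    (one_pos.trans_le hradius)).mono one_pos hradius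
  have hdiff := hball.differentiableOn
  rw [← ENNReal.coe_one, Metric.eball_coe, NNReal.coe_one] at hdiff
  exact hdiff.congr fun q _ ↦ by simp [FormalMultilinearSeries.sum, mul_comm]

lemma EvalsTo.mdifferentiable (hh : 0 < h) (hP : ∀ z : ℍ, EvalsTo P (qParam h z) (f z)) :
    MDiff f := by
  have hsum (q : ℂ) (hq : ‖q‖ < 1) : Summable fun n ↦ algebraMap R ℂ (P.coeff n) * q ^ n := by
    rcases eq_or_ne q 0 with rfl | hq0
    · exact summable_of_ne_finset_zero (s := {0}) fun n hn ↦ by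
        simp [zero_pow (by simpa using hn : n ≠ 0)]
    · have := (hP ⟨invQParam h q, im_invQParam_pos_of_norm_lt_one hh hq hq0⟩).summable
      simpa [qParam_right_inv hh.ne' hq0] using this
  rw [mdifferentiable_iff]
  refine ((differentiableOn_tsum_mul_pow hsum).comp differentiable_qParam.differentiableOn
    fun z hz ↦ mem_ball_zero_iff.2 (norm_qParam_lt_one hh hz)).congr fun z hz ↦ ?_
  rw [Function.comp_apply, ofComplex_apply_of_im_pos hz]
  exact ((hP ⟨z, hz⟩).tsum_eq).symm

lemma EvalsTo.dvd_mul_sub_of_coeff_ne_zero [FaithfulSMul R ℂ] {N : ℕ} (hN : N ≠ 0) {M : ℕ}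
    (hP : ∀ z : ℍ, EvalsTo P (qParam N z) (f z * qParam N z ^ M)) {k : ℤ}
    (hf : ∀ z, f (ModularGroup.T ^ k • z) = f z) {n : ℕ} (hn : P.coeff n ≠ 0) :
    (N : ℤ) ∣ k * (n - M) := by
  set ζ := qParam N k with hζ
  have hT (z : ℍ) : qParam N (ModularGroup.T ^ k • z : ℍ) = ζ * qParam N z := by
    rw [ModularGroup.coe_T_zpow_smul_eq, add_comm, qParam_add]
  have hscale : (P.map (algebraMap R ℂ)).rescale ζ = C (ζ ^ M) * P.map (algebraMap R ℂ) := by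
    refine EvalsTo.unique (f := fun z ↦ ζ ^ M * (f z * qParam N z ^ M)) (by positivity)
      (fun z ↦ EvalsTo.rescale ?_) fun z ↦ (EvalsTo.const _ _).mul (hP z).map_algebraMap
    convert! (hP (ModularGroup.T ^ k • z)).map_algebraMap using 1
    · rw [hT]; rfl
    · rw [hf, hT]
      ring
  have hpow : ζ ^ n = ζ ^ M := by
    have := congrArg (coeff n) hscale
    rw [coeff_rescale, coeff_C_mul, coeff_map] at this
    exact mul_right_cancel₀ ((FaithfulSMul.algebraMap_eq_zero_iff R ℂ).not.2 hn) this
  rw [← qParam_intCast_eq_one_iff hN]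
  have hmul : qParam N (k * (n - M) : ℤ) * ζ ^ M = ζ ^ n := by
    rw [hζ, ← qParam_natCast_mul, ← qParam_natCast_mul, ← qParam_add]
    congr 1
    push_cast
    ring
  rw [hpow] at hmul
  exact (mul_eq_right₀ (pow_ne_zero M (qParam_ne_zero _))).1 hmul

end QExpansion
end EvalsTo

/-! ### The generating series of the partition function -/

lemma evalsTo_mk_one {x : ℂ} (hx : ‖x‖ < 1) : EvalsTo (mk 1 : ℤ⟦X⟧) x (1 - x)⁻¹ := by
  simpa [EvalsTo] using hasSum_geometric_of_norm_lt_one hx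

open scoped WithPiTopology in
lemma mk_card_restricted_le (N : ℕ) :
    (mk fun n ↦ (#(Nat.Partition.restricted n (· ≤ N)) : ℤ)) =
      ∏ i ∈ range N, (mk 1 : ℤ⟦X⟧).expand (i + 1) i.succ_ne_zero := by
  refine (Nat.Partition.hasProd_powerSeriesMk_card_restricted ℤ (· ≤ N)).unique ?_
  have := hasProd_prod_of_ne_finset_one (L := .unconditional ℕ) (s := range N)
    (f := fun i ↦ if i + 1 ≤ N then ∑' j : ℕ, (X : ℤ⟦X⟧) ^ ((i + 1) * j) else 1)
    (fun i hi ↦ if_neg (by simpa using hi))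
  convert! this using 1
  refine prod_congr rfl fun i hi ↦ ?_
  rw [if_pos (by simpa using hi)]
  have h1 : (∑' j : ℕ, (X : ℤ⟦X⟧) ^ ((i + 1) * j)) * (1 - X ^ (i + 1)) = 1 := by
    simp_rw [pow_mul]
    exact WithPiTopology.tsum_pow_mul_one_sub_of_constantCoeff_eq_zero (by simp)
  have h2 : (mk 1 : ℤ⟦X⟧).expand (i + 1) i.succ_ne_zero * (1 - X ^ (i + 1)) = 1 := by
    rw [← expand_X (i + 1) i.succ_ne_zero, ← map_one (expand (i + 1) _),
      ← map_sub, ← map_mul, mk_one_mul_one_sub_eq_one]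
  exact mul_right_cancel₀ (right_ne_zero_of_mul_eq_one h2) (h2.trans h1.symm)

/-- The generating series `∑ p(n) X ^ n` of the partition function. -/
noncomputable def partitionSeries : ℤ⟦X⟧ := mk fun n ↦ (partitionFn n : ℤ)

lemma restricted_le_eq_univ {n N : ℕ} (h : n ≤ N) :
    Nat.Partition.restricted n (· ≤ N) = univ := by
  refine filter_true_of_mem fun p _ i hi ↦ ?_
  exact (Multiset.single_le_sum (fun _ _ ↦ Nat.zero_le _) i hi).trans (p.parts_sum.le.trans h)

lemma evalsTo_mk_card_restricted_le (N : ℕ) {q : ℂ} (hq : ‖q‖ < 1) :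
    EvalsTo (mk fun n ↦ (#(Nat.Partition.restricted n (· ≤ N)) : ℤ)) q
      (∏ i ∈ range N, (1 - q ^ (i + 1)))⁻¹ := by
  rw [mk_card_restricted_le, ← prod_inv_distrib]
  refine EvalsTo.prod fun i _ ↦ EvalsTo.expand _ (evalsTo_mk_one ?_)
  rw [norm_pow]
  exact pow_lt_one₀ (norm_nonneg _) hq i.succ_ne_zero

lemma tprod_one_sub_pow_ne_zero {q : ℂ} (hq : ‖q‖ < 1) : ∏' i, (1 - q ^ (i + 1)) ≠ 0 := by
  refine tprod_one_add_ne_zero_of_summable (f := fun n ↦ -q ^ (n + 1)) (fun i h ↦ ?_) ?_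
  · have : ‖q ^ (i + 1)‖ < 1 := by
      rw [norm_pow]
      exact pow_lt_one₀ (norm_nonneg _) hq i.succ_ne_zero
    rw [← sub_eq_add_neg, sub_eq_zero] at h
    simp [← h] at this
  · simpa using (summable_nat_add_iff 1).mpr (summable_geometric_of_lt_one (norm_nonneg _) hq)

lemma tendsto_prod_one_sub_pow_inv {q : ℂ} (hq : ‖q‖ < 1) :
    Tendsto (fun N ↦ (∏ i ∈ range N, (1 - q ^ (i + 1)))⁻¹) atTop
      (𝓝 (∏' i, (1 - q ^ (i + 1)))⁻¹) :=
  (ModularForm.multipliable_one_sub_pow hq).hasProd.tendsto_prod_nat.inv₀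
    (tprod_one_sub_pow_ne_zero hq)

lemma summable_partitionFn_mul_pow {x : ℝ} (hx0 : 0 ≤ x) (hx1 : x < 1) :
    Summable fun n ↦ (partitionFn n : ℝ) * x ^ n := by
  have hq : ‖(x : ℂ)‖ < 1 := by simpa [abs_of_nonneg hx0] using hx1
  have htend := (tendsto_prod_one_sub_pow_inv hq).norm
  obtain ⟨B, hB⟩ := htend.bddAbove_range
  refine summable_of_sum_range_le (c := B) (fun n ↦ by positivity) fun N ↦ ?_
  refine le_trans ?_ (hB ⟨N, rfl⟩)
  have hN := evalsTo_mk_card_restricted_le N hq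
  have hs : Summable fun n ↦ (#(Nat.Partition.restricted n (· ≤ N)) : ℝ) * x ^ n := by
    simpa [EvalsTo, abs_of_nonneg hx0] using (HasSum.summable hN).norm
  have heq : (∏ i ∈ range N, (1 - (x : ℂ) ^ (i + 1)))⁻¹ =
      ((∑' n, (#(Nat.Partition.restricted n (· ≤ N)) : ℝ) * x ^ n : ℝ) : ℂ) := by
    rw [← HasSum.tsum_eq hN, Complex.ofReal_tsum]
    simp
  beta_reduce
  rw [heq, Complex.norm_real, Real.norm_eq_abs]
  refine le_trans ?_ (le_abs_self _)
  refine le_trans (le_of_eq (sum_congr rfl fun n hn ↦ ?_))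
    (hs.sum_le_tsum (range N) fun n _ ↦ by positivity)
  rw [restricted_le_eq_univ (mem_range.1 hn).le, partitionFn, card_univ]

lemma evalsTo_partitionSeries {q : ℂ} (hq : ‖q‖ < 1) :
    EvalsTo partitionSeries q (∏' i, (1 - q ^ (i + 1)))⁻¹ := by
  have hs := summable_partitionFn_mul_pow (norm_nonneg q) hq
  have hlim : Tendsto (fun N ↦ ∑' n, (#(Nat.Partition.restricted n (· ≤ N)) : ℂ) * q ^ n)
      atTop (𝓝 (∑' n, (partitionFn n : ℂ) * q ^ n)) := by
    refine tendsto_tsum_of_dominated_convergence hs (fun n ↦ ?_) (.of_forall fun N n ↦ ?_)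
    · refine tendsto_const_nhds.congr' ?_
      filter_upwards [eventually_ge_atTop n] with N hN
      rw [restricted_le_eq_univ hN, partitionFn, card_univ]
    · rw [norm_mul, norm_pow, Complex.norm_natCast]
      gcongr
      exact card_le_univ _
  have hsum : Summable fun n ↦ (partitionFn n : ℂ) * q ^ n := by
    refine Summable.of_norm ?_
    simpa using hs
  have heq := tendsto_nhds_unique hlim <| by
    refine (tendsto_prod_one_sub_pow_inv hq).congr fun N ↦ ?_
    simpa [EvalsTo] using (HasSum.tsum_eq (evalsTo_mk_card_restricted_le N hq)).symm
  rw [← heq]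
  simpa [EvalsTo, partitionSeries] using hsum.hasSum

/-! ### The cube root of the `j`-invariant -/

/-- The `q`-expansion of the Eisenstein series `E₄`, with integer coefficients. -/
noncomputable def eisensteinSeriesFour : ℤ⟦X⟧ := mk fun n ↦ if n = 0 then 1 else 240 * (σ 3 n : ℤ)

lemma evalsTo_eisensteinSeriesFour (z : ℍ) :
    EvalsTo eisensteinSeriesFour (qParam 1 z) (ModularForm.E₄ z) := by
  have h := ModularForm.hasSum_qExpansion (f := ModularForm.E₄) one_pos
    one_mem_strictPeriods_SL z
  unfold EvalsTo
  convert! h using 3 with n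
  rw [EisensteinSeries.E_qExpansion_coeff _ (by decide)]
  have hb : bernoulli 4 = -1 / 30 := by
    rw [bernoulli_eq_bernoulli'_of_ne_one (by norm_num), bernoulli'_four]
  split_ifs with hn
  · simp [eisensteinSeriesFour, hn]
  · rw [eisensteinSeriesFour, coeff_mk, if_neg hn, hb]
    norm_num

/-- The cube root `E₄ / η ^ 8` of the `j`-invariant. -/
noncomputable def cbrtJ (z : ℍ) : ℂ := ModularForm.E₄ z / ModularForm.eta z ^ 8

/-- The `q`-expansion of `cbrtJ`, up to the factor `q ^ (-1 / 3)`. -/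
noncomputable def cbrtJSeries : ℤ⟦X⟧ := eisensteinSeriesFour * partitionSeries ^ 8

lemma evalsTo_cbrtJSeries (z : ℍ) :
    EvalsTo cbrtJSeries (qParam 1 z) (cbrtJ z * qParam 3 z) := by
  have hq : ‖qParam 1 z‖ < 1 := norm_qParam_lt_one one_pos z.im_pos
  have heta : ModularForm.eta z = qParam 24 z * ∏' i, (1 - qParam 1 z ^ (i + 1)) := by
    simp [ModularForm.eta, ModularForm.eta_q_eq_pow, qParam]
  have h24 : qParam 24 z ^ 8 = qParam 3 z := by
    convert! qParam_natCast_mul_pow (n := 8) (by norm_num) 3 z using 3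
    norm_num
  have hvalue : cbrtJ z * qParam 3 z =
      ModularForm.E₄ z * (∏' i, (1 - qParam 1 z ^ (i + 1)))⁻¹ ^ 8 := by
    have := tprod_one_sub_pow_ne_zero hq
    have := qParam_ne_zero (h := 3) z
    rw [cbrtJ, heta, mul_pow, h24]
    field_simp
  rw [hvalue]
  exact (evalsTo_eisensteinSeriesFour z).mul ((evalsTo_partitionSeries hq).pow 8)

lemma coeff_zero_cbrtJSeries : cbrtJSeries.coeff 0 = 1 := by
  have : partitionFn 0 = 1 := Fintype.card_unique
  simp [cbrtJSeries, eisensteinSeriesFour, partitionSeries, this]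

section CharTwo

variable {k : Type*} [CommRing k] [CharP k 2]

lemma map_castRingHom_sq (P : ℤ⟦X⟧) :
    P.map (Int.castRingHom k) ^ 2 = (P.expand 2 two_ne_zero).map (Int.castRingHom k) := by
  have : ExpChar k 2 := ExpChar.prime Nat.prime_two
  refine (MvPowerSeries.map_frobenius_expand 2 two_ne_zero).symm.trans ?_
  change PowerSeries.map (frobenius k 2) (PowerSeries.expand 2 two_ne_zero _) = _
  rw [← map_expand]
  ext n
  rw [coeff_map, coeff_map, eq_intCast, map_intCast]

lemma map_cbrtJSeries :
    cbrtJSeries.map (Int.castRingHom k) =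
      (partitionSeries.map (Int.castRingHom k)).expand 8 (by norm_num) := by
  have h240 : (240 : k) = 0 := by
    exact_mod_cast (CharP.cast_eq_zero_iff k 2 240).2 (by norm_num)
  have hE : eisensteinSeriesFour.map (Int.castRingHom k) = 1 := by
    ext n
    rcases eq_or_ne n 0 with rfl | hn <;> simp [eisensteinSeriesFour, coeff_one, *]
  rw [cbrtJSeries, map_mul, map_pow, hE, one_mul, ← map_expand,
    expand_mul 2 two_ne_zero 4 four_ne_zero, expand_mul 2 two_ne_zero 2 two_ne_zero,
    ← map_castRingHom_sq, ← map_castRingHom_sq, ← map_castRingHom_sq, ← pow_mul, ← pow_mul]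

end CharTwo

lemma E₄_S_smul (z : ℍ) :
    ModularForm.E₄ (ModularGroup.S • z) = (z : ℂ) ^ 4 * ModularForm.E₄ z := by
  rw [← ModularGroup.denom_S]
  exact_mod_cast SlashInvariantForm.slash_action_eqn'' ModularForm.E₄
    (MonoidHom.mem_range.2 ⟨ModularGroup.S, rfl⟩) z

lemma sqrt_pow_eight {w : ℂ} (hw : w ≠ 0) : Complex.sqrt w ^ 8 = w ^ 4 := by
  rw [sqrt_eq_exp hw, ← Complex.exp_nat_mul]
  nth_rw 2 [← Complex.exp_log hw]
  rw [← Complex.exp_nat_mul]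
  push_cast
  ring_nf

lemma eta_S_smul_pow_eight (z : ℍ) :
    ModularForm.eta (ModularGroup.S • z : ℍ) ^ 8 = (z : ℂ) ^ 4 * ModularForm.eta z ^ 8 := by
  have h : ModularForm.eta (ModularGroup.S • z : ℍ) =
      (Complex.sqrt Complex.I)⁻¹ * (Complex.sqrt z * ModularForm.eta z) := by
    rw [modular_S_smul]
    simpa [neg_div] using ModularForm.eta_comp_eq_csqrt_I_inv z.2
  rw [h, mul_pow, mul_pow, inv_pow, sqrt_pow_eight Complex.I_ne_zero, sqrt_pow_eight z.ne_zero,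
    Complex.I_pow_four, inv_one, one_mul]

lemma cbrtJ_S_smul (z : ℍ) : cbrtJ (ModularGroup.S • z) = cbrtJ z := by
  rw [cbrtJ, cbrtJ, E₄_S_smul, eta_S_smul_pow_eight]
  exact mul_div_mul_left _ _ (pow_ne_zero 4 z.ne_zero)

/-- A primitive cube root of unity: the factor by which `cbrtJ` is multiplied under `z ↦ z + 1`. -/
noncomputable def cubeRoot : ℂ := (qParam 3 1)⁻¹

lemma cubeRoot_pow_three : cubeRoot ^ 3 = 1 := by
  have h := qParam_natCast_mul_pow (n := 3) (by norm_num) 1 1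
  rw [Nat.cast_ofNat, mul_one] at h
  rw [cubeRoot, inv_pow, h]
  simp [qParam]

lemma cbrtJ_T_smul (z : ℍ) : cbrtJ (ModularGroup.T • z) = cubeRoot * cbrtJ z := by
  have hT : ((ModularGroup.T • z : ℍ) : ℂ) = z + 1 := by
    rw [modular_T_smul]
    simp [add_comm]
  have hq : qParam 1 (z + 1) = qParam 1 z := by
    rw [qParam_add]
    simp [qParam]
  have h : cbrtJ (ModularGroup.T • z) * qParam 3 (z + 1) = cbrtJ z * qParam 3 z := by
    have hz := evalsTo_cbrtJSeries (ModularGroup.T • z)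
    rw [hT, hq] at hz
    exact HasSum.unique hz (evalsTo_cbrtJSeries z)
  have := qParam_ne_zero (h := 3) z
  have := qParam_ne_zero (h := 3) 1
  rw [qParam_add] at h
  rw [cubeRoot]
  field_simp
  exact mul_right_cancel₀ ‹qParam 3 z ≠ 0› (by rw [← h]; ring)

/-- The exponent modulo `3` of the multiplier of `cbrtJ`: the homomorphism from `SL(2, ℤ)` with
`S ↦ 0` and `T ↦ 1`, given by the polynomial in the entries that represents it. -/
def multiplierExponent (γ : SL(2, ℤ)) : ZMod 3 :=
  γ 0 0 * γ 1 0 + γ 1 1 * γ 1 0 + γ 0 1 * γ 1 1 - γ 0 1 * γ 1 1 * γ 1 0 ^ 2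

lemma det_coe_zmod (γ : SL(2, ℤ)) (n : ℕ) :
    (γ 0 0 * γ 1 1 - γ 0 1 * γ 1 0 : ZMod n) = 1 := by
  have := γ.det_coe
  rw [Matrix.det_fin_two] at this
  exact_mod_cast congrArg (Int.cast : ℤ → ZMod n) this

lemma multiplierExponent_mul_T (γ : SL(2, ℤ)) :
    multiplierExponent (γ * ModularGroup.T) = multiplierExponent γ + 1 := by
  have polynomial_identity : ∀ a b c d : ZMod 3, a * d - b * c = 1 →
      a * c + (c + d) * c + (a + b) * (c + d) - (a + b) * (c + d) * c ^ 2 =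
        a * c + d * c + b * d - b * d * c ^ 2 + 1 := by
    decide
  simpa [multiplierExponent, ModularGroup.coe_T, Matrix.mul_apply] using
    polynomial_identity _ _ _ _ (det_coe_zmod γ 3)

lemma multiplierExponent_mul_S (γ : SL(2, ℤ)) :
    multiplierExponent (γ * ModularGroup.S) = multiplierExponent γ := by
  have polynomial_identity : ∀ a b c d : ZMod 3, a * d - b * c = 1 →
      b * d + -(c * d) + -(a * -c) - -(a * -c * d ^ 2) =
        a * c + d * c + b * d - b * d * c ^ 2 := by
    decide
  simpa [multiplierExponent, ModularGroup.coe_S, Matrix.mul_apply] using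
    polynomial_identity _ _ _ _ (det_coe_zmod γ 3)

/-- The multiplier of `cbrtJ`, in terms of `multiplierExponent`. -/
noncomputable def multiplier (k : ZMod 3) : ℂ := cubeRoot ^ k.val

lemma multiplier_pow_three (k : ZMod 3) : multiplier k ^ 3 = 1 := by
  rw [multiplier, pow_right_comm, cubeRoot_pow_three, one_pow]

lemma multiplier_add_one (k : ZMod 3) : multiplier (k + 1) = cubeRoot * multiplier k := by
  rw [multiplier, multiplier, ← pow_succ', ZMod.val_add,
    pow_eq_pow_mod (k.val + 1) cubeRoot_pow_three]
  rfl

theorem cbrtJ_smul (γ : SL(2, ℤ)) (z : ℍ) :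
    cbrtJ (γ • z) = multiplier (multiplierExponent γ) * cbrtJ z := by
  have hmem : γ ∈ Subgroup.closure {ModularGroup.S, ModularGroup.T} :=
    SpecialLinearGroup.SL2Z_generators ▸ Subgroup.mem_top γ
  have hS (γ : SL(2, ℤ)) :
      (∀ z, cbrtJ (γ • z) = multiplier (multiplierExponent γ) * cbrtJ z) ↔
      ∀ z, cbrtJ ((γ * ModularGroup.S) • z) =
        multiplier (multiplierExponent (γ * ModularGroup.S)) * cbrtJ z := by
    rw [(MulAction.surjective ModularGroup.S).forall]
    simp only [cbrtJ_S_smul, multiplierExponent_mul_S, mul_smul]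
  have hT (γ : SL(2, ℤ)) :
      (∀ z, cbrtJ (γ • z) = multiplier (multiplierExponent γ) * cbrtJ z) ↔
      ∀ z, cbrtJ ((γ * ModularGroup.T) • z) =
        multiplier (multiplierExponent (γ * ModularGroup.T)) * cbrtJ z := by
    rw [(MulAction.surjective ModularGroup.T).forall]
    simp only [cbrtJ_T_smul, multiplierExponent_mul_T, mul_smul, multiplier_add_one,
      mul_left_comm, mul_assoc]
  suffices ∀ z, cbrtJ (γ • z) = multiplier (multiplierExponent γ) * cbrtJ z from this z
  induction hmem using Subgroup.closure_induction_right with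
  | one => simp [multiplier, multiplierExponent]
  | mul_right x _ y hy ih =>
    rcases hy with rfl | rfl
    · exact (hS x).1 ih
    · exact (hT x).1 ih
  | mul_inv_cancel x _ y hy ih =>
    rcases hy with rfl | rfl
    · exact (hS _).2 (by simpa using ih)
    · exact (hT _).2 (by simpa using ih)

lemma cbrtJ_smul_pow_three (γ : SL(2, ℤ)) (z : ℍ) : cbrtJ (γ • z) ^ 3 = cbrtJ z ^ 3 := by
  rw [cbrtJ_smul, mul_pow, multiplier_pow_three, one_mul]

/-! ### Upper triangular matrices -/

/-- The action `z ↦ (a * z + b) / d` of an upper triangular matrix on the upper half-plane,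
for positive `a` and `d`. -/
noncomputable def tri (a : ℕ) (b : ℤ) (d : ℕ) (z : ℍ) : ℍ := ofComplex ((a * z + b) / d)

lemma coe_tri {a d : ℕ} (ha : 0 < a) (hd : 0 < d) (b : ℤ) (z : ℍ) :
    (tri a b d z : ℂ) = (a * z + b) / d := by
  have him : ((a * z + b) / d : ℂ).im = a * z.im / d := by
    simp [Complex.div_natCast_im]
  rw [tri, ofComplex_apply_of_im_pos]
  rw [him]
  have := z.im_pos
  positivity

lemma mul_upperTriangular_eq_iff {R : Type*} [CommRing R] {M M' : Matrix (Fin 2) (Fin 2) R}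
    {a b d a' b' d' : R} :
    M' * !![a', b'; 0, d'] = !![a, b; 0, d] * M ↔
      (M' 0 0 * a' = a * M 0 0 + b * M 1 0 ∧
        M' 0 0 * b' + M' 0 1 * d' = a * M 0 1 + b * M 1 1) ∧
      M' 1 0 * a' = d * M 1 0 ∧ M' 1 0 * b' + M' 1 1 * d' = d * M 1 1 := by
  simp only [← Matrix.ext_iff, Fin.forall_fin_two, Matrix.mul_apply, Fin.sum_univ_two]
  simp

lemma smul_tri {γ γ' : SL(2, ℤ)} {a d a' d' : ℕ} {b b' : ℤ} (ha : 0 < a) (hd : 0 < d)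
    (ha' : 0 < a') (hd' : 0 < d')
    (h : (γ' : Matrix (Fin 2) (Fin 2) ℤ) * !![(a' : ℤ), b'; 0, d'] = !![(a : ℤ), b; 0, d] * γ)
    (z : ℍ) : γ' • tri a' b' d' z = tri a b d (γ • z) := by
  obtain ⟨⟨h₀₀, h₀₁⟩, h₁₀, h₁₁⟩ := mul_upperTriangular_eq_iff.1 h
  replace h₀₀ := congrArg (Int.cast : ℤ → ℂ) h₀₀
  replace h₀₁ := congrArg (Int.cast : ℤ → ℂ) h₀₁
  replace h₁₀ := congrArg (Int.cast : ℤ → ℂ) h₁₀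
  replace h₁₁ := congrArg (Int.cast : ℤ → ℂ) h₁₁
  push_cast at h₀₀ h₀₁ h₁₀ h₁₁
  have hd_ne : (d : ℂ) ≠ 0 := Nat.cast_ne_zero.2 hd.ne'
  have hd'_ne : (d' : ℂ) ≠ 0 := Nat.cast_ne_zero.2 hd'.ne'
  have hden_ne : (γ 1 0 * z + γ 1 1 : ℂ) ≠ 0 := by
    simpa [denom] using denom_ne_zero (γ : GL (Fin 2) ℝ) z
  have hnum : (γ' 0 0 * ((a' * z + b') / d') + γ' 0 1 : ℂ) =
      (a * (γ 0 0 * z + γ 0 1) + b * (γ 1 0 * z + γ 1 1)) / d' := by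
    field_simp
    linear_combination z * h₀₀ + h₀₁
  have hden : (γ' 1 0 * ((a' * z + b') / d') + γ' 1 1 : ℂ) = d * (γ 1 0 * z + γ 1 1) / d' := by
    field_simp
    linear_combination z * h₁₀ + h₁₁
  ext1
  rw [coe_tri ha hd, coe_specialLinearGroup_apply, coe_specialLinearGroup_apply, coe_tri ha' hd']
  simp only [algebraMap_int_eq, eq_intCast, Complex.ofReal_intCast]
  rw [hnum, hden]
  generalize (γ 1 0 * z + γ 1 1 : ℂ) = w at hden_ne
  field_simp

lemma exists_eq_mul_upperTriangular {A : Matrix (Fin 2) (Fin 2) ℤ} (hA : 0 < A.det) :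
    ∃ (γ : SL(2, ℤ)) (a d : ℕ) (b : ℤ), 0 < a ∧ 0 < d ∧ A = γ * !![(a : ℤ), b; 0, d] := by
  obtain ⟨p, q, r, s, rfl⟩ : ∃ p q r s, A = !![p, q; r, s] := ⟨_, _, _, _, A.eta_fin_two⟩
  rw [Matrix.det_fin_two_of] at hA
  have ha : 0 < Int.gcd p r := by
    refine Int.gcd_pos_iff.2 (or_iff_not_imp_left.2 fun hp hr ↦ hA.ne' ?_)
    rw [not_not.1 hp, hr, zero_mul, mul_zero, sub_zero]
  obtain ⟨x, y, hxy, hp, hr⟩ := Int.exists_gcd_one ha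
  generalize Int.gcd p r = a at ha hp hr
  subst hp hr
  obtain ⟨γ, hγ₀, hγ₁⟩ := (Int.isCoprime_iff_gcd_eq_one.2 hxy).exists_SL2_col 0
  have hdet := γ.det_coe
  rw [Matrix.det_fin_two, hγ₀, hγ₁] at hdet
  have hd : 0 < x * s - y * q := by
    refine pos_of_mul_pos_right (a := (a : ℤ)) ?_ (Int.natCast_nonneg a)
    linear_combination hA
  obtain ⟨d, hd_eq⟩ := Int.eq_ofNat_of_zero_le hd.le
  refine ⟨γ, a, d, γ 1 1 * q - γ 0 1 * s, ha, by omega, ?_⟩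
  have hq : x * (γ 1 1 * q - γ 0 1 * s) + γ 0 1 * d = q := by
    linear_combination q * hdet - γ 0 1 * hd_eq
  have hs : y * (γ 1 1 * q - γ 0 1 * s) + γ 1 1 * d = s := by
    linear_combination s * hdet - γ 1 1 * hd_eq
  rw [← Matrix.one_mul !![x * a, q; y * a, s], eq_comm, Matrix.one_fin_two,
    mul_upperTriangular_eq_iff, hγ₀, hγ₁]
  simpa using ⟨hq, hs⟩

lemma exists_eq_mul_upperTriangular_of_isCoprime {A : Matrix (Fin 2) (Fin 2) ℤ} (hA : 0 < A.det)
    {N : ℤ} (hN : IsCoprime A.det N) :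
    ∃ (γ : SL(2, ℤ)) (a d : ℕ) (b : ℤ), 0 < a ∧ 0 < d ∧ A = γ * !![(a : ℤ), N * b; 0, d] := by
  obtain ⟨γ, a, d, b, ha, hd, rfl⟩ := exists_eq_mul_upperTriangular hA
  have hdN : IsCoprime (d : ℤ) N := by
    refine hN.of_isCoprime_of_dvd_left ⟨a, ?_⟩
    rw [Matrix.det_mul, γ.det_coe, Matrix.det_fin_two_of]
    ring
  obtain ⟨u, v, huv⟩ := hdN
  refine ⟨γ * ModularGroup.T ^ (b * u), a, d, b * v, ha, hd, ?_⟩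
  have hT : (ModularGroup.T ^ (b * u) : SL(2, ℤ)) * !![(a : ℤ), N * (b * v); 0, d] =
      !![(a : ℤ), b; 0, d] * 1 := by
    have hb : N * (b * v) + b * u * d = b := by linear_combination b * huv
    simpa [mul_upperTriangular_eq_iff, ModularGroup.coe_T_zpow] using hb
  rw [Matrix.SpecialLinearGroup.coe_mul, Matrix.mul_assoc, hT, Matrix.mul_one]

section CbrtJTri

variable {γ γ' : SL(2, ℤ)} {t a d : ℕ} {b b' : ℤ}

lemma mul_eq_of_mul_upperTriangular_eq
    (h : (γ' : Matrix (Fin 2) (Fin 2) ℤ) * !![(a : ℤ), b'; 0, d] = !![(1 : ℤ), b; 0, t] * γ) :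
    a * d = t := by
  have := congrArg Matrix.det h
  simp only [Matrix.det_mul, Matrix.SpecialLinearGroup.det_coe, Matrix.det_fin_two_of, mul_zero,
    sub_zero, one_mul, mul_one] at this
  exact_mod_cast this

lemma multiplierExponent_eq_of_mul_upperTriangular_eq (h3 : ¬ 3 ∣ t)
    (h : (γ' : Matrix (Fin 2) (Fin 2) ℤ) * !![(a : ℤ), 3 * b'; 0, d] =
      !![(1 : ℤ), 3 * b; 0, t] * γ) :
    multiplierExponent γ' = t * multiplierExponent γ := by
  have h30 : (3 : ZMod 3) = 0 := rfl
  obtain ⟨⟨h₀₀, h₀₁⟩, h₁₀, h₁₁⟩ := mul_upperTriangular_eq_iff.1 h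
  replace h₀₀ := congrArg (Int.cast : ℤ → ZMod 3) h₀₀
  replace h₀₁ := congrArg (Int.cast : ℤ → ZMod 3) h₀₁
  replace h₁₀ := congrArg (Int.cast : ℤ → ZMod 3) h₁₀
  replace h₁₁ := congrArg (Int.cast : ℤ → ZMod 3) h₁₁
  push_cast [h30, zero_mul, mul_zero, zero_add, add_zero, one_mul] at h₀₀ h₀₁ h₁₀ h₁₁
  have had : (a * d : ZMod 3) = t := by
    exact_mod_cast congrArg (Nat.cast : ℕ → ZMod 3) (mul_eq_of_mul_upperTriangular_eq h)
  have ht : (a * d : ZMod 3) ≠ 0 := by rwa [had, Ne, ZMod.natCast_eq_zero_iff]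
  have sq_eq_one : ∀ x : ZMod 3, x ≠ 0 → x ^ 2 = 1 := by decide
  have ha := sq_eq_one _ (left_ne_zero_of_mul ht)
  have hd := sq_eq_one _ (right_ne_zero_of_mul ht)
  have hc : (γ' 1 0 : ZMod 3) = d * γ 1 0 := by
    refine mul_right_cancel₀ (left_ne_zero_of_mul ht) ?_
    rw [h₁₀, ← had]
    ring
  have hδ : (γ' 1 1 : ZMod 3) = a * γ 1 1 := by
    refine mul_right_cancel₀ (right_ne_zero_of_mul ht) ?_
    rw [h₁₁, ← had]
    ring
  rw [multiplierExponent, multiplierExponent, hc, hδ, ← had, ← h₀₀, ← h₀₁]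
  linear_combination (-γ' 0 0 * d * γ 1 0) * ha - a * γ' 0 1 * γ 1 1 * hd

lemma cbrtJ_tri_smul (h3 : ¬ 3 ∣ t) (ht : 0 < t)
    (h : (γ' : Matrix (Fin 2) (Fin 2) ℤ) * !![(a : ℤ), 3 * b'; 0, d] =
      !![(1 : ℤ), 3 * b; 0, t] * γ) (z : ℍ) :
    cbrtJ (tri 1 (3 * b) t (γ • z)) =
      multiplier (t * multiplierExponent γ) * cbrtJ (tri a (3 * b') d z) := by
  have had := mul_eq_of_mul_upperTriangular_eq h
  rw [← smul_tri one_pos ht (Nat.pos_of_mul_pos_right (had ▸ ht))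
    (Nat.pos_of_mul_pos_left (had ▸ ht)) (by exact_mod_cast h), cbrtJ_smul,
    multiplierExponent_eq_of_mul_upperTriangular_eq h3 h]

lemma cbrtJ_tri_congr (ht : 0 < t) (h3 : ¬ 3 ∣ t) (h : b ≡ b' [ZMOD t]) (z : ℍ) :
    cbrtJ (tri 1 (3 * b) t z) = cbrtJ (tri 1 (3 * b') t z) := by
  obtain ⟨k, hk⟩ := h.symm.dvd
  have hT : (ModularGroup.T ^ (3 * k) : SL(2, ℤ)) * !![((1 : ℕ) : ℤ), 3 * b'; 0, t] =
      !![(1 : ℤ), 3 * b; 0, t] * (1 : SL(2, ℤ)) := by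
    have hb : 3 * b' + 3 * k * t = 3 * b := by linear_combination -3 * hk
    simpa [mul_upperTriangular_eq_iff, ModularGroup.coe_T_zpow] using hb
  simpa [multiplierExponent, multiplier] using cbrtJ_tri_smul h3 ht hT z

end CbrtJTri

/-! ### Expansions at the cusps -/

/-- The ring of algebraic integers in `ℂ`. -/
abbrev AlgInt : Type := integralClosure ℤ ℂ

lemma qParam_natCast_pow_eq_one (d : ℕ) (k : ℤ) : qParam d k ^ d = 1 := by
  rcases eq_or_ne d 0 with rfl | hd
  · simp
  · rw [← qParam_natCast_mul]
    exact_mod_cast (qParam_intCast_eq_one_iff hd).2 (dvd_mul_right (d : ℤ) k)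

/-- The root of unity `exp (2 * π * I * k / d)`, as an algebraic integer. For `d = 0` it is `1`. -/
noncomputable def rootOfUnity (d : ℕ) (k : ℤ) : AlgInt :=
  ⟨qParam d k, by
    rcases Nat.eq_zero_or_pos d with rfl | hd
    · simp [qParam]
    · exact .of_pow hd (qParam_natCast_pow_eq_one d k ▸ isIntegral_one)⟩

lemma algebraMap_rootOfUnity (d : ℕ) (k : ℤ) :
    algebraMap AlgInt ℂ (rootOfUnity d k) = qParam d k := rfl

/-- The expansion of `cbrtJ (w + 3 * b / d)` in powers of `qParam 1 w`, up to the factor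
`(qParam 3 w)⁻¹`. -/
noncomputable def twistedSeries (d : ℕ) (b : ℤ) : AlgInt⟦X⟧ :=
  mk fun m ↦ rootOfUnity d (b * (3 * m - 1)) * (cbrtJSeries.coeff m : ℤ)

lemma evalsTo_twistedSeries (d : ℕ) (b : ℤ) {w w' : ℍ} (h : (w : ℂ) = w' + 3 * b / d) :
    EvalsTo (twistedSeries d b) (qParam 1 w') (cbrtJ w * qParam 3 w') := by
  have h₁ : qParam 1 w = qParam d b ^ 3 * qParam 1 w' := by
    rw [← qParam_natCast_mul, qParam, qParam, qParam, ← Complex.exp_add, h]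
    push_cast
    ring_nf
  have h₃ : qParam 3 w = qParam d b * qParam 3 w' := by
    rw [qParam, qParam, qParam, ← Complex.exp_add, h]
    push_cast
    ring_nf
  have hpow (m : ℕ) : qParam d (b * (3 * m - 1) : ℤ) = (qParam d b)⁻¹ * (qParam d b ^ 3) ^ m := by
    rw [eq_inv_mul_iff_mul_eq₀ (qParam_ne_zero _), ← qParam_add, ← pow_mul, ← qParam_natCast_mul]
    push_cast
    ring_nf
  have hsum := HasSum.mul_left (qParam d b)⁻¹ (evalsTo_cbrtJSeries w)
  rw [h₃, mul_left_comm, inv_mul_cancel_left₀ (qParam_ne_zero _)] at hsum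
  refine hsum.congr_fun fun m ↦ ?_
  rw [twistedSeries, coeff_mk, map_mul, algebraMap_rootOfUnity, hpow, h₁, mul_pow]
  simp only [map_intCast, algebraMap_int_eq, eq_intCast]
  ring

lemma qParam_three_tri_zero {a d : ℕ} (ha : 0 < a) (hd : 0 < d) (z : ℍ) :
    qParam 3 (tri a 0 d z) = qParam (3 * (a * d : ℕ)) z ^ a ^ 2 := by
  have : (a : ℂ) ≠ 0 := Nat.cast_ne_zero.2 ha.ne'
  have : (d : ℂ) ≠ 0 := Nat.cast_ne_zero.2 hd.ne'
  rw [← qParam_natCast_mul, qParam, qParam, coe_tri ha hd]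
  congr 1
  push_cast
  field_simp
  ring

lemma qParam_one_tri_zero {a d : ℕ} (ha : 0 < a) (hd : 0 < d) (z : ℍ) :
    qParam 1 (tri a 0 d z) = qParam (3 * (a * d : ℕ)) z ^ (3 * a ^ 2) := by
  have h := qParam_natCast_mul_pow three_ne_zero 1 (tri a 0 d z)
  rw [mul_one, Nat.cast_ofNat, qParam_three_tri_zero ha hd] at h
  rw [← h, ← pow_mul, mul_comm (a ^ 2)]

lemma exists_eq_add_mul_of_coeff_ne_zero {R : Type*} [CommRing R] {P : R⟦X⟧} {k l n : ℕ}
    {hl : l ≠ 0} (hn : (X ^ k * expand l hl P).coeff n ≠ 0) : ∃ m, n = k + l * m := by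
  rw [coeff_X_pow_mul'] at hn
  split_ifs at hn with hk
  · obtain ⟨m, hm⟩ : l ∣ n - k := by
      by_contra h
      exact hn (coeff_expand_of_not_dvd _ hl _ h)
    exact ⟨m, by omega⟩
  · exact absurd rfl hn

lemma exists_evalsTo_cbrtJ_tri {a d t : ℕ} (ht : 0 < t) (had : a * d = t) (b : ℤ) :
    ∃ P : AlgInt⟦X⟧,
      (∀ z : ℍ, EvalsTo P (qParam (3 * t) z)
        (cbrtJ (tri a (3 * b) d z) * qParam (3 * t) z ^ t ^ 2)) ∧
      ∀ n, P.coeff n ≠ 0 → ∃ m, n + a ^ 2 = t ^ 2 + 3 * a ^ 2 * m := by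
  have ha : 0 < a := Nat.pos_of_mul_pos_right (had ▸ ht)
  have hd : 0 < d := Nat.pos_of_mul_pos_left (had ▸ ht)
  have hat : a ^ 2 ≤ t ^ 2 := Nat.pow_le_pow_left (Nat.le_of_dvd ht ⟨d, had.symm⟩) 2
  have ha3 : 3 * a ^ 2 ≠ 0 := by positivity
  refine ⟨X ^ (t ^ 2 - a ^ 2) * expand (3 * a ^ 2) ha3 (twistedSeries d b), fun z ↦ ?_,
    fun n hn ↦ ?_⟩
  · have htri : (tri a (3 * b) d z : ℂ) = tri a 0 d z + 3 * b / d := by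
      rw [coe_tri ha hd, coe_tri ha hd]
      push_cast
      ring
    have h := evalsTo_twistedSeries d b htri
    rw [qParam_one_tri_zero ha hd, qParam_three_tri_zero ha hd, had] at h
    rw [← pow_sub_mul_pow _ hat, mul_left_comm]
    exact (EvalsTo.X_pow _ _).mul (h.expand ha3)
  · obtain ⟨m, rfl⟩ := exists_eq_add_mul_of_coeff_ne_zero hn
    exact ⟨m, by omega⟩

/-! ### The trace of `cbrtJ` -/

section Trace

variable (t : ℕ) [NeZero t]

/-- The sum of `cbrtJ ((z + 3 * b) / t)` over `b` modulo `t`. -/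
noncomputable def traceSum (z : ℍ) : ℂ := ∑ b : ZMod t, cbrtJ (tri 1 (3 * b.cast) t z)

/-- The expansion of `traceSum t` in powers of `qParam (3 * t)`, up to the factor
`(qParam (3 * t)) ^ (- t ^ 2)`: summing over `b` keeps one residue class of coefficients. -/
noncomputable def traceSeries : ℤ⟦X⟧ :=
  X ^ (t ^ 2 - 1) * expand 3 three_ne_zero
    (mk fun m ↦ if (t : ℤ) ∣ 3 * m - 1 then t * cbrtJSeries.coeff m else 0)

lemma sum_qParam_cast_mul (k : ℤ) :
    ∑ b : ZMod t, qParam t ((b.cast * k : ℤ) : ℂ) = if (t : ℤ) ∣ k then (t : ℂ) else 0 := by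
  have hq (j : ℤ) : qParam t j = ZMod.stdAddChar (j : ZMod t) := by
    rw [ZMod.stdAddChar_coe, qParam, Complex.ofReal_natCast]
  have h := AddChar.sum_mulShift (k : ZMod t) (ZMod.isPrimitive_stdAddChar t)
  simp only [hq]
  simp only [Int.cast_mul, ZMod.intCast_cast, ZMod.cast_id', id_eq]
  rw [h, ZMod.card, Nat.cast_ite, Nat.cast_zero]
  exact if_congr (ZMod.intCast_zmod_eq_zero_iff_dvd k t) rfl rfl

lemma evalsTo_traceSeries (z : ℍ) :
    EvalsTo (traceSeries t) (qParam (3 * t) z) (traceSum t z * qParam (3 * t) z ^ t ^ 2) := by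
  have ht : 0 < t := Nat.pos_of_neZero t
  have hsum : EvalsTo (∑ b : ZMod t, twistedSeries t b.cast) (qParam 1 (tri 1 0 t z))
      (∑ b : ZMod t, cbrtJ (tri 1 (3 * b.cast) t z) * qParam 3 (tri 1 0 t z)) := by
    refine EvalsTo.sum fun b _ ↦ evalsTo_twistedSeries t b.cast ?_
    rw [coe_tri one_pos ht, coe_tri one_pos ht]
    push_cast
    ring
  have hcoeff : EvalsTo (mk fun m ↦ if (t : ℤ) ∣ 3 * m - 1 then t * cbrtJSeries.coeff m else 0)
      (qParam 1 (tri 1 0 t z)) (traceSum t z * qParam 3 (tri 1 0 t z)) := by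
    rw [traceSum, sum_mul]
    refine HasSum.congr_fun hsum fun m ↦ ?_
    simp only [coeff_mk, map_sum, twistedSeries, map_mul, algebraMap_rootOfUnity, ← sum_mul,
      sum_qParam_cast_mul, map_intCast]
    split_ifs <;> simp
  rw [qParam_one_tri_zero one_pos ht, qParam_three_tri_zero one_pos ht, one_pow, one_mul] at hcoeff
  rw [← pow_sub_mul_pow _ (Nat.one_le_pow 2 t ht), mul_left_comm]
  exact (EvalsTo.X_pow _ _).mul (hcoeff.expand three_ne_zero)

end Trace

section TraceCusps

variable {t : ℕ} {γ : SL(2, ℤ)}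

lemma natCast_dvd_of_mul_upperTriangular_eq {γ' : SL(2, ℤ)} {a d : ℕ} {b b' : ℤ}
    (h : (γ' : Matrix (Fin 2) (Fin 2) ℤ) * !![(a : ℤ), b'; 0, d] = !![(1 : ℤ), b; 0, t] * γ) :
    (a : ℤ) ∣ γ 0 0 + b * γ 1 0 :=
  ⟨γ' 0 0, by linear_combination -(mul_upperTriangular_eq_iff.1 h).1.1⟩

lemma not_dvd_of_dvd_lower_left {p : ℕ} (hp : p.Prime) (hc : (p : ℤ) ∣ γ 1 0) (b : ℤ) :
    ¬ (p : ℤ) ∣ γ 0 0 + b * γ 1 0 := by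
  intro h
  have hdet := γ.det_coe
  rw [Matrix.det_fin_two] at hdet
  have ha : (p : ℤ) ∣ γ 0 0 := (dvd_add_left (hc.mul_left b)).1 h
  exact (Nat.prime_iff_prime_int.1 hp).not_dvd_one
    (hdet ▸ dvd_sub (ha.mul_right _) (hc.mul_left _))

variable [NeZero t]

lemma exists_upperTriangular_form (h3 : ¬ 3 ∣ t) (γ : SL(2, ℤ)) (b : ℤ) :
    ∃ (γ' : SL(2, ℤ)) (a d : ℕ) (b' : ℤ),
      (γ' : Matrix (Fin 2) (Fin 2) ℤ) * !![(a : ℤ), 3 * b'; 0, d] =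
        !![(1 : ℤ), 3 * b; 0, t] * γ := by
  have hdet : (!![(1 : ℤ), 3 * b; 0, t] * (γ : Matrix (Fin 2) (Fin 2) ℤ)).det = t := by
    rw [Matrix.det_mul, γ.det_coe, Matrix.det_fin_two_of]
    ring
  obtain ⟨γ', a, d, b', -, -, h⟩ := exists_eq_mul_upperTriangular_of_isCoprime (N := 3)
    (hdet ▸ Nat.cast_pos.2 (Nat.pos_of_neZero t)) (by
      rw [hdet]
      exact_mod_cast ((Nat.prime_three.coprime_iff_not_dvd.2 h3).symm).isCoprime)
  exact ⟨γ', a, d, b', h.symm⟩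

lemma exists_evalsTo_traceSum_smul (h3 : ¬ 3 ∣ t) (γ : SL(2, ℤ)) :
    ∃ P : AlgInt⟦X⟧,
      (∀ z : ℍ, EvalsTo P (qParam (3 * t) z) (traceSum t (γ • z) * qParam (3 * t) z ^ t ^ 2)) ∧
      ∀ n < t ^ 2, P.coeff n ≠ 0 →
        ∃ (a : ℕ) (b : ℤ), n + a ^ 2 = t ^ 2 ∧ (a : ℤ) ∣ γ 0 0 + b * γ 1 0 := by
  have ht : 0 < t := Nat.pos_of_neZero t
  choose γ' a d b' h using fun b : ZMod t ↦ exists_upperTriangular_form h3 γ b.cast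
  choose P hP hP0 using fun b ↦
    exists_evalsTo_cbrtJ_tri ht (mul_eq_of_mul_upperTriangular_eq (h b)) (b' b)
  let u : AlgInt := ⟨multiplier (t * multiplierExponent γ),
    .of_pow three_pos (by rw [multiplier_pow_three]; exact isIntegral_one)⟩
  refine ⟨C u * ∑ b, P b, fun z ↦ ?_, fun n hnt hn ↦ ?_⟩
  · have hsum : traceSum t (γ • z) * qParam (3 * t) z ^ t ^ 2 = algebraMap AlgInt ℂ u *
        ∑ b, cbrtJ (tri (a b) (3 * b' b) (d b) z) * qParam (3 * t) z ^ t ^ 2 := by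
      rw [traceSum, sum_mul, mul_sum]
      refine sum_congr rfl fun b _ ↦ ?_
      rw [cbrtJ_tri_smul h3 ht (h b), mul_assoc]
      rfl
    rw [hsum]
    exact (EvalsTo.const _ _).mul (EvalsTo.sum fun b _ ↦ hP b z)
  · rw [coeff_C_mul, map_sum] at hn
    obtain ⟨b, -, hb⟩ := exists_ne_zero_of_sum_ne_zero (right_ne_zero_of_mul hn)
    obtain ⟨m, hm⟩ := hP0 b n hb
    obtain rfl : m = 0 := by
      by_contra hm0
      nlinarith [Nat.pos_of_ne_zero hm0]
    exact ⟨a b, 3 * b.cast, hm, natCast_dvd_of_mul_upperTriangular_eq (h b)⟩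

lemma dvd_lower_left_of_mem_Gamma0 (hγ : γ ∈ CongruenceSubgroup.Gamma0 (radical t)) {p : ℕ}
    (hp : p.Prime) (hpt : p ∣ t) : (p : ℤ) ∣ γ 1 0 := by
  have hpr : p ∣ radical t :=
    (UniqueFactorizationMonoid.dvd_radical_iff_of_irreducible hp.prime.irreducible
      (NeZero.ne t)).2 hpt
  rw [CongruenceSubgroup.Gamma0_mem, ZMod.intCast_zmod_eq_zero_iff_dvd] at hγ
  exact (Int.natCast_dvd_natCast.2 hpr).trans hγ

lemma exists_mul_upperTriangular_eq_of_mem_Gamma0 (h3 : ¬ 3 ∣ t)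
    (hγ : γ ∈ CongruenceSubgroup.Gamma0 (radical t)) (b : ℤ) :
    ∃ (γ' : SL(2, ℤ)) (b' : ℤ),
      (γ' : Matrix (Fin 2) (Fin 2) ℤ) * !![((1 : ℕ) : ℤ), 3 * b'; 0, t] =
        !![(1 : ℤ), 3 * b; 0, t] * γ := by
  obtain ⟨γ', a, d, b', h⟩ := exists_upperTriangular_form h3 γ b
  have had := mul_eq_of_mul_upperTriangular_eq h
  obtain rfl : a = 1 := Nat.eq_one_iff_not_exists_prime_dvd.2 fun p hp hpa ↦
    not_dvd_of_dvd_lower_left hp (dvd_lower_left_of_mem_Gamma0 hγ hp (hpa.trans ⟨d, had.symm⟩)) _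
      ((Int.natCast_dvd_natCast.2 hpa).trans (natCast_dvd_of_mul_upperTriangular_eq h))
  obtain rfl : d = t := (one_mul d).symm.trans had
  exact ⟨γ', b', h⟩

lemma injective_of_mul_upperTriangular_eq (h3 : ¬ 3 ∣ t) {γ' : ZMod t → SL(2, ℤ)}
    {b' : ZMod t → ℤ}
    (h : ∀ b, (γ' b : Matrix (Fin 2) (Fin 2) ℤ) * !![((1 : ℕ) : ℤ), 3 * b' b; 0, t] =
      !![(1 : ℤ), 3 * b.cast; 0, t] * γ) :
    Function.Injective fun b ↦ (b' b : ZMod t) := by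
  have h₁₁ (b) : γ' b 1 1 = γ 1 1 - 3 * b' b * γ 1 0 := by
    obtain ⟨-, h₁₀, h₁₁⟩ := mul_upperTriangular_eq_iff.1 (h b)
    refine mul_right_cancel₀ (Nat.cast_ne_zero.2 (NeZero.ne t) : (t : ℤ) ≠ 0) ?_
    push_cast at h₁₀
    linear_combination h₁₁ - 3 * b' b * h₁₀
  have hunit (b) : (γ' b 0 0 : ZMod t) * γ' b 1 1 = 1 := by
    have hdet := congrArg (Int.cast : ℤ → ZMod t) ((γ' b : Matrix _ _ ℤ).det_fin_two.symm.trans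
      (γ' b).det_coe)
    have h₁₀ := congrArg (Int.cast : ℤ → ZMod t) (mul_upperTriangular_eq_iff.1 (h b)).2.1
    push_cast [ZMod.natCast_self] at hdet h₁₀
    linear_combination hdet + γ' b 0 1 * h₁₀
  have hlin (b) : 3 * b * (γ' b 1 1 : ZMod t) = 3 * b' b * γ 0 0 - γ 0 1 := by
    obtain ⟨⟨h₀₀, h₀₁⟩, -⟩ := mul_upperTriangular_eq_iff.1 (h b)
    replace h₀₀ := congrArg (Int.cast : ℤ → ZMod t) h₀₀
    replace h₀₁ := congrArg (Int.cast : ℤ → ZMod t) h₀₁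
    replace h₁₁ := congrArg (Int.cast : ℤ → ZMod t) (h₁₁ b)
    push_cast [ZMod.natCast_self, ZMod.intCast_cast, ZMod.cast_id, id] at h₀₀ h₀₁ h₁₁
    linear_combination 3 * b * h₁₁ - h₀₁ + 3 * b' b * h₀₀
  intro b₁ b₂ (hb : (b' b₁ : ZMod t) = b' b₂)
  have hγ' : (γ' b₁ 1 1 : ZMod t) = γ' b₂ 1 1 := by
    rw [h₁₁, h₁₁]
    push_cast
    rw [hb]
  have hlin₁ := hlin b₁
  rw [hb, ← hlin b₂, hγ'] at hlin₁
  have h3unit : IsUnit (3 : ZMod t) := by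
    exact_mod_cast (ZMod.isUnit_iff_coprime 3 t).2 (Nat.prime_three.coprime_iff_not_dvd.2 h3)
  refine h3unit.mul_left_cancel ?_
  linear_combination γ' b₂ 0 0 * hlin₁ - 3 * (b₁ - b₂) * hunit b₂

lemma traceSum_smul_of_mem_Gamma0 (h3 : ¬ 3 ∣ t)
    (hγ : γ ∈ CongruenceSubgroup.Gamma0 (radical t)) (z : ℍ) :
    traceSum t (γ • z) = multiplier (t * multiplierExponent γ) * traceSum t z := by
  have ht : 0 < t := Nat.pos_of_neZero t
  choose γ' b' h using fun b : ZMod t ↦ exists_mul_upperTriangular_eq_of_mem_Gamma0 h3 hγ b.cast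
  rw [traceSum, traceSum, mul_sum]
  refine Fintype.sum_bijective _
    (Finite.injective_iff_bijective.1 (injective_of_mul_upperTriangular_eq h3 h)) _ _ fun b ↦ ?_
  rw [cbrtJ_tri_smul h3 ht (h b)]
  congr 1
  refine cbrtJ_tri_congr ht h3 ?_ z
  rw [← ZMod.intCast_eq_intCast_iff, ZMod.intCast_cast, ZMod.cast_id]

lemma traceSum_smul_T_zpow_smul (h3 : ¬ 3 ∣ t) {p w : ℕ} (hpw : radical t = p * w)
    (hpγ : (p : ℤ) ∣ γ 1 0) (z : ℍ) :
    traceSum t (γ • ModularGroup.T ^ (3 * w : ℤ) • z) = traceSum t (γ • z) := by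
  have hmem : γ * ModularGroup.T ^ (w : ℤ) * γ⁻¹ ∈ CongruenceSubgroup.Gamma0 (radical t) := by
    rw [CongruenceSubgroup.Gamma0_mem, ZMod.intCast_zmod_eq_zero_iff_dvd, hpw]
    have hentry : (γ * ModularGroup.T ^ (w : ℤ) * γ⁻¹) 1 0 = -(γ 1 0 * (w * γ 1 0)) := by
      simp only [Matrix.SpecialLinearGroup.coe_mul, ModularGroup.coe_T_zpow,
        Matrix.SpecialLinearGroup.coe_inv, Matrix.adjugate_fin_two, Matrix.mul_apply,
        Fin.sum_univ_two, Matrix.of_apply, Matrix.cons_val', Matrix.cons_val_fin_one,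
        Matrix.cons_val_zero, Matrix.cons_val_one]
      ring
    rw [hentry, Nat.cast_mul]
    exact ((mul_dvd_mul_right hpγ _).trans
      (mul_dvd_mul_left _ (dvd_mul_right _ _))).neg_right
  obtain ⟨k, hk⟩ : ∃ k : ZMod 3, ∀ z, traceSum t (γ • ModularGroup.T ^ (w : ℤ) • z) =
      multiplier k * traceSum t (γ • z) := by
    refine ⟨t * multiplierExponent (γ * ModularGroup.T ^ (w : ℤ) * γ⁻¹), fun z ↦ ?_⟩
    rw [← traceSum_smul_of_mem_Gamma0 h3 hmem, mul_smul, inv_smul_smul, mul_smul]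
  have hT : ModularGroup.T ^ (3 * w : ℤ) = (ModularGroup.T ^ (w : ℤ)) ^ 3 := by
    rw [mul_comm, zpow_mul]
    rfl
  rw [hT, pow_three, mul_smul, mul_smul, hk, hk, hk, ← mul_assoc, ← mul_assoc, ← pow_three',
    multiplier_pow_three, one_mul]

lemma X_pow_dvd_of_dvd_lower_left (h3 : ¬ 3 ∣ t) {p : ℕ} (hp : p.Prime) (hpt : p ∣ t)
    (hpγ : (p : ℤ) ∣ γ 1 0) {P : AlgInt⟦X⟧}
    (hP : ∀ z : ℍ, EvalsTo P (qParam (3 * t) z)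
      (traceSum t (γ • z) * qParam (3 * t) z ^ t ^ 2)) : X ^ t ^ 2 ∣ P := by
  have ht : t ≠ 0 := NeZero.ne t
  rw [X_pow_dvd_iff]
  intro n hn
  by_contra hcoeff
  obtain ⟨Q, hQ, hQ0⟩ := exists_evalsTo_traceSum_smul h3 γ
  obtain rfl : P = Q := EvalsTo.unique (by positivity) hP hQ
  obtain ⟨a, b, hna, hab⟩ := hQ0 n hn hcoeff
  refine not_dvd_of_dvd_lower_left hp hpγ b (dvd_trans ?_ hab)
  obtain ⟨w, hw⟩ := (UniqueFactorizationMonoid.dvd_radical_iff_of_irreducible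
    hp.prime.irreducible ht).2 hpt
  have hdvd : ((3 * t : ℕ) : ℤ) ∣ 3 * w * (n - (t ^ 2 : ℕ)) :=
    EvalsTo.dvd_mul_sub_of_coeff_ne_zero (f := fun z ↦ traceSum t (γ • z)) (by positivity)
      (by simpa only [Nat.cast_mul, Nat.cast_ofNat] using hP)
      (traceSum_smul_T_zpow_smul h3 hw hpγ) hcoeff
  have hna' : (n : ℤ) - (t ^ 2 : ℕ) = -(a : ℤ) ^ 2 := by
    have : (n + a ^ 2 : ℤ) = t ^ 2 := by exact_mod_cast hna
    push_cast
    linear_combination this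
  rw [hna', mul_neg, dvd_neg, mul_assoc] at hdvd
  have hta : (t : ℤ) ∣ w * a ^ 2 :=
    (mul_dvd_mul_iff_left three_ne_zero).1 (by exact_mod_cast hdvd)
  have hpa : p * w ∣ a ^ 2 * w := by
    rw [← hw, mul_comm]
    exact UniqueFactorizationMonoid.radical_dvd_self.trans (by exact_mod_cast hta)
  have hw0 : 0 < w := Nat.pos_of_mul_pos_left (hw ▸ Nat.pos_of_ne_zero
    UniqueFactorizationMonoid.radical_ne_zero)
  exact Int.natCast_dvd_natCast.2 (hp.dvd_of_dvd_pow (Nat.dvd_of_mul_dvd_mul_right hw0 hpa))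

end TraceCusps

/-! ### Functions of level one -/

section LevelOne

variable {R : Type*} [CommRing R] [Algebra R ℂ] {f : ℍ → ℂ} {P : R⟦X⟧}

lemma exists_eq_const_of_invariant {h : ℝ} (hh : 0 < h) (hf : ∀ (γ : SL(2, ℤ)) z, f (γ • z) = f z)
    (hP : ∀ z : ℍ, EvalsTo P (qParam h z) (f z)) : ∃ c, ∀ z, f z = c := by
  have hslash (γ : SL(2, ℤ)) : f ∣[(0 : ℤ)] γ = f := by
    ext z
    rw [ModularForm.SL_slash_apply, hf]
    simp
  let F : ModularForm 𝒮ℒ 0 :=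
    { toFun := f
      slash_action_eq' := fun _ ⟨γ, hγ⟩ ↦ hγ ▸ hslash γ
      holo' := EvalsTo.mdifferentiable hh hP
      bdd_at_cusps' {c} hc := by
        rw [Subgroup.IsArithmetic.isCusp_iff_isCusp_SL2Z] at hc
        rw [OnePoint.isBoundedAt_iff_forall_SL2Z hc]
        intro γ _
        rw [hslash γ]
        exact isBoundedAtImInfty_of_hasSum_qExpansion hh hP }
  obtain ⟨c, hc⟩ := ModularFormClass.levelOne_weight_zero_const F
  exact ⟨c, congrFun hc⟩

variable {N : ℕ} (hN : N ≠ 0)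

include hN

lemma exists_evalsTo_cbrtJ_pow_three :
    ∃ J : R⟦X⟧, J.coeff 0 = 1 ∧
      ∀ z : ℍ, EvalsTo J (qParam N z) (cbrtJ z ^ 3 * qParam N z ^ N) := by
  refine ⟨expand N hN ((cbrtJSeries.map (Int.castRingHom R)) ^ 3), ?_, fun z ↦ ?_⟩
  · have h := congrArg (Int.castRingHom R) coeff_zero_cbrtJSeries
    rw [← coeff_map, coeff_zero_eq_constantCoeff, map_one] at h
    simp [h]
  · have hN₁ := qParam_natCast_mul_pow hN 1 z
    have h₃ := qParam_natCast_mul_pow three_ne_zero 1 z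
    rw [mul_one] at hN₁ h₃
    refine EvalsTo.expand _ ?_
    rw [hN₁, ← h₃, ← mul_pow, h₃]
    exact ((evalsTo_cbrtJSeries z).map _ (RingHom.ext_int _ _)).pow 3

lemma exists_invariant_coeff_zero_eq [FaithfulSMul R ℂ] {M : ℕ}
    (hf : ∀ (γ : SL(2, ℤ)) z, f (γ • z) = f z)
    (hP : ∀ z : ℍ, EvalsTo P (qParam N z) (f z * qParam N z ^ M)) :
    ∃ (g : ℍ → ℂ) (Q : R⟦X⟧), (∀ (γ : SL(2, ℤ)) z, g (γ • z) = g z) ∧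
      (∀ z : ℍ, EvalsTo Q (qParam N z) (g z * qParam N z ^ M)) ∧
      Q.coeff 0 = P.coeff 0 ∧ ∀ n, P.coeff 0 ∣ Q.coeff n := by
  by_cases ha : P.coeff 0 = 0
  · exact ⟨0, 0, by simp, by simp [EvalsTo, hasSum_zero], by simp [ha], by simp⟩
  obtain ⟨s, rfl⟩ : N ∣ M := by
    have := EvalsTo.dvd_mul_sub_of_coeff_ne_zero (k := 1) hN hP (fun z ↦ hf _ z) ha
    simpa [Int.natCast_dvd_natCast] using this
  obtain ⟨J, hJ₀, hJ⟩ := exists_evalsTo_cbrtJ_pow_three (R := R) hN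
  refine ⟨fun z ↦ algebraMap R ℂ (P.coeff 0) * (cbrtJ z ^ 3) ^ s, C (P.coeff 0) * J ^ s,
    fun γ z ↦ ?_, fun z ↦ ?_, ?_, fun n ↦ ?_⟩
  · simp only [cbrtJ_smul_pow_three]
  · rw [mul_assoc, pow_mul, ← mul_pow]
    exact (EvalsTo.const _ _).mul ((hJ z).pow s)
  · rw [coeff_zero_eq_constantCoeff] at hJ₀
    simp [hJ₀]
  · rw [coeff_C_mul]
    exact dvd_mul_right _ _

theorem coeff_mem_of_invariant [FaithfulSMul R ℂ] (I : Ideal R) {M : ℕ}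
    (hf : ∀ (γ : SL(2, ℤ)) z, f (γ • z) = f z)
    (hP : ∀ z : ℍ, EvalsTo P (qParam N z) (f z * qParam N z ^ M))
    (hI : ∀ m ≤ M, P.coeff m ∈ I) (n : ℕ) : P.coeff n ∈ I := by
  have hN' : (0 : ℝ) < N := Nat.cast_pos.2 (Nat.pos_of_ne_zero hN)
  induction M generalizing f P n with
  | zero =>
    simp only [pow_zero, mul_one] at hP
    obtain ⟨c, hc⟩ := exists_eq_const_of_invariant hN' hf hP
    have hconst : P.map (algebraMap R ℂ) = C c :=
      EvalsTo.unique hN' (f := fun _ ↦ c) (fun z ↦ hc z ▸ (hP z).map_algebraMap)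
        fun _ ↦ EvalsTo.const c _
    rcases eq_or_ne n 0 with rfl | hn
    · exact hI 0 le_rfl
    · have := congrArg (coeff n) hconst
      rw [coeff_map, coeff_C, if_neg hn, FaithfulSMul.algebraMap_eq_zero_iff] at this
      exact this ▸ I.zero_mem
  | succ M ih =>
    obtain ⟨g, Q, hg, hQ, hQ₀, hdvd⟩ := exists_invariant_coeff_zero_eq hN hf hP
    have hQI (m : ℕ) : Q.coeff m ∈ I := I.mem_of_dvd (hdvd m) (hI 0 (Nat.zero_le _))
    obtain ⟨P', hP'⟩ : X ∣ P - Q := by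
      rw [X_dvd_iff, ← coeff_zero_eq_constantCoeff_apply, map_sub, hQ₀, sub_self]
    have hcoeff (m : ℕ) : P'.coeff m = P.coeff (m + 1) - Q.coeff (m + 1) := by
      rw [← map_sub, hP', coeff_succ_X_mul]
    have hmem := ih (f := f - g) (P := P') (fun γ z ↦ by simp only [Pi.sub_apply, hf, hg])
      (fun z ↦ EvalsTo.of_X_mul (qParam_ne_zero _) (by
        rw [← hP', mul_assoc, ← pow_succ, Pi.sub_apply, sub_mul]
        exact (hP z).sub (hQ z)))
      fun m hm ↦ hcoeff m ▸ I.sub_mem (hI _ (by omega)) (hQI _)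
    rcases n with - | n
    · exact hI 0 (Nat.zero_le _)
    · rw [← sub_add_cancel (P.coeff (n + 1)) (Q.coeff (n + 1)), ← hcoeff]
      exact I.add_mem (hmem n) (hQI _)

end LevelOne

/-! ### Reduction modulo a prime above two -/

lemma exists_ringHom_charP.{u} (R : Type u) [CommRing R] [Algebra.IsIntegral ℤ R] [FaithfulSMul ℤ R]
    {p : ℕ} (hp : p.Prime) :
    ∃ (k : Type u) (_ : Field k) (_ : CharP k p), Nonempty (R →+* k) := by
  have : (Ideal.span {(p : ℤ)}).IsMaximal :=
    PrincipalIdealRing.isMaximal_of_irreducible (Nat.prime_iff_prime_int.1 hp).irreducible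
  obtain ⟨I, hI, hIp⟩ := Ideal.exists_ideal_over_maximal_of_isIntegral (S := R)
    (Ideal.span {(p : ℤ)}) (by
      rw [(RingHom.injective_iff_ker_eq_bot _).1 (FaithfulSMul.algebraMap_injective ℤ R)]
      exact bot_le)
  let _ : Field (R ⧸ I) := Ideal.Quotient.field I
  have hp0 : (p : R ⧸ I) = 0 := by
    have : algebraMap ℤ R p ∈ I := by
      rw [← Ideal.mem_comap, hIp]
      exact Ideal.mem_span_singleton_self _
    rw [map_natCast] at this
    exact_mod_cast Ideal.Quotient.eq_zero_iff_mem.2 this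
  exact ⟨R ⧸ I, inferInstance, (CharP.charP_iff_prime_eq_zero hp).2 hp0, ⟨Ideal.Quotient.mk I⟩⟩

section Coefficients

variable {k : Type*} [Field k] [CharP k 2]

lemma coeff_cbrtJSeries_cast_ne_zero_iff (m : ℕ) :
    ((cbrtJSeries.coeff m : ℤ) : k) ≠ 0 ↔ ∃ n, m = 8 * n ∧ Odd (partitionFn n) := by
  have hm := congrArg (coeff m) (map_cbrtJSeries (k := k))
  rw [coeff_map, eq_intCast] at hm
  have hodd (n : ℕ) : (partitionFn n : k) ≠ 0 ↔ Odd (partitionFn n) := by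
    rw [Ne, CharP.cast_eq_zero_iff k 2, ← even_iff_two_dvd, Nat.not_even_iff_odd]
  rw [hm]
  constructor
  · intro h
    obtain ⟨n, rfl⟩ : 8 ∣ m := by
      by_contra h8
      exact h (coeff_expand_of_not_dvd _ _ _ h8)
    refine ⟨n, rfl, (hodd n).1 ?_⟩
    simpa [coeff_expand_mul, partitionSeries] using h
  · rintro ⟨n, rfl, hn⟩
    simpa [coeff_expand_mul, partitionSeries] using (hodd n).2 hn

lemma dvd_three_mul_sub_one_iff {t δ n : ℕ} (hco : t.Coprime 6) (hδt : δ < t)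
    (hδ : 24 * δ ≡ 1 [MOD t]) : (t : ℤ) ∣ 3 * (8 * n : ℕ) - 1 ↔ ∃ m, n = t * m + δ := by
  have hcop : t.Coprime 24 := (hco.pow_right 3).coprime_dvd_right (by norm_num)
  have hmod : (t : ℤ) ∣ 3 * (8 * n : ℕ) - 1 ↔ n ≡ δ [MOD t] := by
    rw [← Int.modEq_iff_dvd, Int.modEq_comm, ← Nat.cast_ofNat, ← Nat.cast_mul, ← Nat.cast_one,
      Int.natCast_modEq_iff, ← mul_assoc]
    exact ⟨fun h ↦ (h.trans hδ.symm).cancel_left_of_coprime hcop,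
      fun h ↦ (h.mul_left 24).trans hδ⟩
  rw [hmod, Nat.ModEq, Nat.mod_eq_of_lt hδt]
  constructor
  · rintro rfl
    exact ⟨n / t, (Nat.div_add_mod n t).symm⟩
  · rintro ⟨m, rfl⟩
    rw [Nat.mul_add_mod, Nat.mod_eq_of_lt hδt]

lemma coeff_traceSeries (t m : ℕ) :
    (traceSeries t).coeff (t ^ 2 - 1 + 3 * m) =
      if (t : ℤ) ∣ 3 * m - 1 then t * cbrtJSeries.coeff m else 0 := by
  rw [traceSeries, add_comm, coeff_X_pow_mul, coeff_expand_mul, coeff_mk]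

lemma coeff_traceSeries_cast_ne_zero_iff {t δ : ℕ} (hco : t.Coprime 6) (hδt : δ < t)
    (hδ : 24 * δ ≡ 1 [MOD t]) (n : ℕ) :
    (((traceSeries t).coeff n : ℤ) : k) ≠ 0 ↔
      ∃ m, n + 1 = t ^ 2 + 24 * (t * m + δ) ∧ Odd (partitionFn (t * m + δ)) := by
  have htk : (t : k) ≠ 0 := by
    rw [Ne, CharP.cast_eq_zero_iff k 2, ← Nat.prime_two.coprime_iff_not_dvd]
    exact (hco.coprime_dvd_right (by norm_num)).symm
  have ht2 : 1 ≤ t ^ 2 := Nat.one_le_pow _ _ (by omega)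
  constructor
  · intro h
    obtain ⟨m, rfl⟩ : ∃ m, n = t ^ 2 - 1 + 3 * m :=
      exists_eq_add_mul_of_coeff_ne_zero fun h₀ ↦ h (by rw [traceSeries, h₀, Int.cast_zero])
    rw [coeff_traceSeries] at h
    split_ifs at h with hdvd
    · rw [Int.cast_mul] at h
      obtain ⟨l, rfl, hl⟩ := (coeff_cbrtJSeries_cast_ne_zero_iff m).1 (right_ne_zero_of_mul h)
      obtain ⟨m, rfl⟩ := (dvd_three_mul_sub_one_iff hco hδt hδ).1 hdvd
      exact ⟨m, by omega, hl⟩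
    · simp at h
  · rintro ⟨m, hm, hodd⟩
    obtain rfl : n = t ^ 2 - 1 + 3 * (8 * (t * m + δ)) := by omega
    rw [coeff_traceSeries, if_pos ((dvd_three_mul_sub_one_iff hco hδt hδ).2 ⟨m, rfl⟩),
      Int.cast_mul, Int.cast_natCast]
    exact mul_ne_zero htk ((coeff_cbrtJSeries_cast_ne_zero_iff _).2 ⟨_, rfl, hodd⟩)

lemma map_traceSeries_ne_zero {t δ m : ℕ} (hco : t.Coprime 6) (hδt : δ < t)
    (hδ : 24 * δ ≡ 1 [MOD t]) (hm : Odd (partitionFn (t * m + δ))) :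
    (traceSeries t).map (Int.castRingHom k) ≠ 0 := by
  intro h₀
  refine (coeff_traceSeries_cast_ne_zero_iff (k := k) hco hδt hδ
    (t ^ 2 + 24 * (t * m + δ) - 1)).2 ⟨m, ?_, hm⟩ ?_
  · have : 0 < t ^ 2 := pow_pos (by omega) 2
    omega
  · rw [← eq_intCast (Int.castRingHom k), ← coeff_map, h₀, map_zero]

lemma le_order_map_traceSeries {t δ m : ℕ} (hco : t.Coprime 6) (hδt : δ < t)
    (hδ : 24 * δ ≡ 1 [MOD t]) (hmin : ∀ m', Odd (partitionFn (t * m' + δ)) → m ≤ m') :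
    (t ^ 2 + 24 * (t * m + δ) - 1 : ℕ) ≤ ((traceSeries t).map (Int.castRingHom k)).order := by
  refine nat_le_order _ _ fun i hi ↦ ?_
  rw [coeff_map, eq_intCast]
  by_contra h
  obtain ⟨m', hm', hodd⟩ := (coeff_traceSeries_cast_ne_zero_iff hco hδt hδ i).1 h
  have := Nat.mul_le_mul_left t (hmin m' hodd)
  omega

end Coefficients

/-! ### Elementary symmetric polynomials of an orbit -/

lemma sum_powersetCard_prod_comp {ι R : Type*} [CommSemiring R] {O : Finset ι} (e : ι ↪ ι)
    (he : ∀ i ∈ O, e i ∈ O) (F : ι → R) (d : ℕ) :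
    ∑ S ∈ O.powersetCard d, ∏ i ∈ S, F (e i) = ∑ S ∈ O.powersetCard d, ∏ i ∈ S, F i := by
  conv_rhs => rw [← map_eq_of_subset (map_subset_iff_subset_preimage.2 fun i hi ↦
    mem_preimage.2 (he i hi)), powersetCard_map]
  simp

lemma sum_powersetCard_card_prod_eq {ι R : Type*} [CommSemiring R] {O B : Finset ι} (hBO : B ⊆ O)
    {F : ι → R} (hF : ∀ i ∈ O, i ∉ B → F i = 0) :
    ∑ S ∈ O.powersetCard #B, ∏ i ∈ S, F i = ∏ i ∈ B, F i := by
  refine sum_eq_single_of_mem B (mem_powersetCard.2 ⟨hBO, rfl⟩) fun S hS hSB ↦ ?_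
  obtain ⟨hSO, hcard⟩ := mem_powersetCard.1 hS
  obtain ⟨i, hiS, hiB⟩ := not_subset.1 fun h ↦ hSB (eq_of_subset_of_card_le h hcard.ge)
  exact prod_eq_zero hiS (hF i (hSO hiS) hiB)

theorem sum_order_le {R k : Type*} [CommRing R] [Algebra R ℂ] [FaithfulSMul R ℂ] [CommRing k]
    [IsDomain k] (φ : R →+* k) {N M : ℕ} (hN : N ≠ 0) {O : Finset (ℍ → ℂ)}
    (hO : ∀ f ∈ O, ∀ γ : SL(2, ℤ), (fun z ↦ f (γ • z)) ∈ O) {P : (ℍ → ℂ) → R⟦X⟧}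
    (hP : ∀ f ∈ O, ∀ z : ℍ, EvalsTo (P f) (qParam N z) (f z * qParam N z ^ M))
    {B : Finset (ℍ → ℂ)} (hB : ∀ f, f ∈ B ↔ f ∈ O ∧ (P f).map φ ≠ 0) :
    ∑ f ∈ B, ((P f).map φ).order ≤ #B * M := by
  by_contra! hlt
  set Q := ∑ S ∈ O.powersetCard #B, ∏ f ∈ S, P f with hQ
  have hQB : Q.map φ = ∏ f ∈ B, (P f).map φ := by
    simp only [hQ, map_sum, map_prod]
    exact sum_powersetCard_card_prod_eq (fun f hf ↦ ((hB f).1 hf).1) fun f hf hfB ↦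
      of_not_not fun h₀ ↦ hfB ((hB f).2 ⟨hf, h₀⟩)
  have hQ₀ : Q.map φ ≠ 0 := hQB ▸ prod_ne_zero_iff.2 fun f hf ↦ ((hB f).1 hf).2
  have hinv (γ : SL(2, ℤ)) (z : ℍ) : ∑ S ∈ O.powersetCard #B, ∏ f ∈ S, f (γ • z) =
      ∑ S ∈ O.powersetCard #B, ∏ f ∈ S, f z :=
    sum_powersetCard_prod_comp ⟨fun f z ↦ f (γ • z), fun f g h ↦ funext fun z ↦ by
      simpa using congrFun h (γ⁻¹ • z)⟩ (fun f hf ↦ hO f hf γ) (fun f ↦ f z) _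
  have heval (z : ℍ) : EvalsTo Q (qParam N z)
      ((∑ S ∈ O.powersetCard #B, ∏ f ∈ S, f z) * qParam N z ^ (#B * M)) := by
    rw [sum_mul]
    refine EvalsTo.sum fun S hS ↦ ?_
    obtain ⟨hSO, hcard⟩ := mem_powersetCard.1 hS
    convert! EvalsTo.prod (s := S) fun f hf ↦ hP f (hSO hf) z using 1
    rw [prod_mul_distrib, prod_const, hcard, ← pow_mul, mul_comm M]
  refine hQ₀ (PowerSeries.ext fun m ↦ ?_)
  rw [coeff_map, map_zero]
  refine coeff_mem_of_invariant hN (RingHom.ker φ) hinv heval (fun i hi ↦ ?_) m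
  rw [RingHom.mem_ker, ← coeff_map]
  refine coeff_of_lt_order i ?_
  rw [hQB, order_prod]
  exact lt_of_le_of_lt (by exact_mod_cast hi) hlt

/-! ### The orbit of the cube of the trace -/

lemma finite_range_comp_smul {G α β : Type*} [Group G] [MulAction G α] (H : Subgroup G)
    [H.FiniteIndex] {f : α → β} (hf : ∀ g ∈ H, ∀ x, f (g • x) = f x) :
    (Set.range fun (g : G) (x : α) ↦ f (g • x)).Finite := by
  let F : G ⧸ H → α → β := Quotient.lift (fun g x ↦ f (g⁻¹ • x)) fun g g' h ↦ funext fun x ↦ by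
    rw [← hf _ (QuotientGroup.leftRel_apply.1 h) (g'⁻¹ • x), smul_smul, mul_inv_cancel_right]
  refine (Set.finite_range F).subset ?_
  rintro _ ⟨g, rfl⟩
  exact ⟨QuotientGroup.mk g⁻¹, funext fun x ↦ congrArg (fun g ↦ f (g • x)) (inv_inv g)⟩

lemma isCoprime_radical_of_forall_not_dvd {t : ℕ} {c : ℤ}
    (hc : ∀ p : ℕ, p.Prime → p ∣ t → ¬ (p : ℤ) ∣ c) : IsCoprime c (radical t : ℕ) := by
  rw [Int.isCoprime_iff_gcd_eq_one, Int.gcd, Int.natAbs_natCast]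
  refine Nat.coprime_of_dvd fun p hp hpc hpr ↦ hc p hp ?_ (Int.natCast_dvd.2 hpc)
  exact hpr.trans UniqueFactorizationMonoid.radical_dvd_self

/-- The cube of `traceSum t`, precomposed with `γ`. -/
noncomputable def traceSumCube (t : ℕ) [NeZero t] (γ : SL(2, ℤ)) (z : ℍ) : ℂ :=
  traceSum t (γ • z) ^ 3

section Orbit

variable {t : ℕ} [NeZero t]

lemma traceSumCube_mul (h3 : ¬ 3 ∣ t) {γ : SL(2, ℤ)}
    (hγ : γ ∈ CongruenceSubgroup.Gamma0 (radical t)) (γ' : SL(2, ℤ)) :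
    traceSumCube t (γ * γ') = traceSumCube t γ' := by
  ext z
  rw [traceSumCube, traceSumCube, mul_smul, traceSum_smul_of_mem_Gamma0 h3 hγ, mul_pow,
    multiplier_pow_three, one_mul]

lemma finite_range_traceSumCube (h3 : ¬ 3 ∣ t) : (Set.range (traceSumCube t)).Finite := by
  have : NeZero (radical t) := ⟨UniqueFactorizationMonoid.radical_ne_zero⟩
  refine finite_range_comp_smul (f := fun z ↦ traceSum t z ^ 3)
    (CongruenceSubgroup.Gamma0 (radical t)) fun γ hγ z ↦ ?_
  simpa [traceSumCube] using congrFun (traceSumCube_mul h3 hγ 1) z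

-- `S * T ^ j`, for `j` modulo `radical t`, represent the cusps with denominator prime to `t`.
lemma exists_traceSumCube_eq (h3 : ¬ 3 ∣ t) {γ : SL(2, ℤ)}
    (hγ : ∀ p : ℕ, p.Prime → p ∣ t → ¬ (p : ℤ) ∣ γ 1 0) :
    ∃ j ∈ range (radical t),
      traceSumCube t γ = traceSumCube t (ModularGroup.S * ModularGroup.T ^ (j : ℤ)) := by
  have : NeZero (radical t) := ⟨UniqueFactorizationMonoid.radical_ne_zero⟩
  set j : ZMod (radical t) := γ 1 1 * (γ 1 0 : ZMod (radical t))⁻¹ with hj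
  have hjγ : γ 1 0 * j = γ 1 1 := by
    rw [hj, mul_left_comm,
      ZMod.coe_int_mul_inv_eq_one (isCoprime_radical_of_forall_not_dvd hγ), mul_one]
  refine ⟨j.val, mem_range.2 j.val_lt, ?_⟩
  have hmul : γ * (ModularGroup.S * ModularGroup.T ^ (j.val : ℤ))⁻¹ *
      (ModularGroup.S * ModularGroup.T ^ (j.val : ℤ)) = γ := inv_mul_cancel_right _ _
  conv_lhs => rw [← hmul]
  refine traceSumCube_mul h3 ?_ _
  rw [CongruenceSubgroup.Gamma0_mem]
  have hentry : (γ * (ModularGroup.S * ModularGroup.T ^ (j.val : ℤ))⁻¹) 1 0 =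
      γ 1 0 * j.val - γ 1 1 := by
    simp only [mul_inv_rev, Matrix.SpecialLinearGroup.coe_mul, Matrix.SpecialLinearGroup.coe_inv,
      ModularGroup.coe_T_zpow, ModularGroup.coe_S, Matrix.adjugate_fin_two, Matrix.mul_apply,
      Fin.sum_univ_two, Matrix.of_apply, Matrix.cons_val', Matrix.cons_val_fin_one,
      Matrix.cons_val_zero, Matrix.cons_val_one]
    ring
  rw [hentry]
  push_cast
  rw [ZMod.natCast_zmod_val, hjγ, sub_self]

lemma exists_evalsTo_traceSumCube (h3 : ¬ 3 ∣ t) (γ : SL(2, ℤ)) :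
    ∃ P : AlgInt⟦X⟧,
      (∀ z : ℍ, EvalsTo P (qParam (3 * t) z)
        (traceSumCube t γ z * qParam (3 * t) z ^ (3 * t ^ 2))) ∧
      (X ^ (3 * t ^ 2) ∣ P ∨ ∃ j ∈ range (radical t),
        traceSumCube t γ = traceSumCube t (ModularGroup.S * ModularGroup.T ^ (j : ℤ))) := by
  obtain ⟨P, hP, -⟩ := exists_evalsTo_traceSum_smul h3 γ
  refine ⟨P ^ 3, fun z ↦ ?_, ?_⟩
  · rw [traceSumCube, mul_comm 3 (t ^ 2), pow_mul, ← mul_pow]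
    exact (hP z).pow 3
  · by_cases! hγ : ∃ p : ℕ, p.Prime ∧ p ∣ t ∧ (p : ℤ) ∣ γ 1 0
    · obtain ⟨p, hp, hpt, hpγ⟩ := hγ
      rw [mul_comm 3, pow_mul]
      exact .inl (pow_dvd_pow_of_dvd (X_pow_dvd_of_dvd_lower_left h3 hp hpt hpγ hP) 3)
    · exact .inr (exists_traceSumCube_eq h3 hγ)

lemma map_eq_map_traceSeries_pow_three {k : Type*} [CommRing k] (φ : AlgInt →+* k)
    {P : AlgInt⟦X⟧} (hP : ∀ z : ℍ, EvalsTo P (qParam (3 * t) z)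
      (traceSumCube t 1 z * qParam (3 * t) z ^ (3 * t ^ 2))) :
    P.map φ = (traceSeries t).map (Int.castRingHom k) ^ 3 := by
  have ht : (0 : ℝ) < 3 * t := mul_pos three_pos (Nat.cast_pos.2 (Nat.pos_of_neZero t))
  have hP' : P = (traceSeries t).map (Int.castRingHom AlgInt) ^ 3 := by
    refine EvalsTo.unique ht hP fun z ↦ ?_
    rw [traceSumCube, one_smul, mul_comm 3 (t ^ 2), pow_mul, ← mul_pow]
    exact ((evalsTo_traceSeries t z).map _ (RingHom.ext_int _ _)).pow 3
  rw [hP', map_pow]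
  congr 1
  ext n
  simp only [coeff_map, eq_intCast, map_intCast]

end Orbit

lemma le_card_mul_of_sum_le {α : Type*} {B S : Finset α} {n : α → ℕ∞} {M D : ℕ} {a : α}
    (haB : a ∈ B) (haS : a ∈ S) (hD : D ≤ n a) (hn : ∀ b ∈ B, b ∉ S → M ≤ n b)
    (hsum : ∑ b ∈ B, n b ≤ #B * M) : D ≤ #S * M := by
  classical
  have hle : ∑ b ∈ B, ((M : ℕ∞) + if b = a then (D : ℕ∞) else 0) ≤
      ∑ b ∈ B, (n b + if b ∈ S then (M : ℕ∞) else 0) := by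
    refine sum_le_sum fun b hb ↦ ?_
    rcases eq_or_ne b a with rfl | hba
    · rw [if_pos rfl, if_pos haS, add_comm]
      exact add_le_add_left hD _
    · rw [if_neg hba, add_zero]
      split_ifs with hbS
      · exact le_add_self
      · exact (hn b hb hbS).trans_eq (add_zero _).symm
  have hS : ∑ b ∈ B, (if b ∈ S then (M : ℕ∞) else 0) ≤ #S * M := by
    rw [← sum_filter, sum_const, nsmul_eq_mul]
    gcongr
    exact fun b hb ↦ (mem_filter.1 hb).2
  rw [sum_add_distrib, sum_add_distrib, sum_const, nsmul_eq_mul, sum_ite_eq', if_pos haB] at hle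
  have := hle.trans (add_le_add hsum hS)
  norm_cast at this
  omega

lemma exists_family_traceSumCube {t : ℕ} [NeZero t] (h3 : ¬ 3 ∣ t) :
    ∃ (S : Finset (ℍ → ℂ)) (P : (ℍ → ℂ) → AlgInt⟦X⟧),
      #S ≤ radical t + 1 ∧ traceSumCube t 1 ∈ S ∧
      ∀ f ∈ Set.range (traceSumCube t),
        (∀ z : ℍ, EvalsTo (P f) (qParam (3 * t) z) (f z * qParam (3 * t) z ^ (3 * t ^ 2))) ∧
        (f ∉ S → X ^ (3 * t ^ 2) ∣ P f) := by
  classical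
  set S := insert (traceSumCube t 1) ((range (radical t)).image fun j : ℕ ↦
    traceSumCube t (ModularGroup.S * ModularGroup.T ^ (j : ℤ)))
  have hex : ∀ f ∈ Set.range (traceSumCube t), ∃ P : AlgInt⟦X⟧,
      (∀ z : ℍ, EvalsTo P (qParam (3 * t) z) (f z * qParam (3 * t) z ^ (3 * t ^ 2))) ∧
      (f ∉ S → X ^ (3 * t ^ 2) ∣ P) := by
    rintro _ ⟨γ, rfl⟩
    obtain ⟨P, hP, hPγ⟩ := exists_evalsTo_traceSumCube h3 γ
    exact ⟨P, hP, fun hγ ↦ hPγ.resolve_right fun ⟨j, hj, hjγ⟩ ↦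
      hγ (mem_insert_of_mem (mem_image.2 ⟨j, hj, hjγ.symm⟩))⟩
  choose! P hP using hex
  exact ⟨S, P, (card_insert_le _ _).trans
    (add_le_add_left (card_image_le.trans_eq (card_range _)) 1), mem_insert_self _ _, hP⟩

theorem twenty_four_mul_le {t δ m : ℕ} [NeZero t] (hco : t.Coprime 6) (hδt : δ < t)
    (hδ : 24 * δ ≡ 1 [MOD t]) (hm : Odd (partitionFn (t * m + δ)))
    (hmin : ∀ m', Odd (partitionFn (t * m' + δ)) → m ≤ m') :
    24 * (t * m + δ) ≤ t ^ 2 * radical t + 1 := by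
  classical
  have h3 : ¬ 3 ∣ t := Nat.prime_three.coprime_iff_not_dvd.1
    (hco.coprime_dvd_right (by norm_num)).symm
  obtain ⟨k, _, _, ⟨φ⟩⟩ := exists_ringHom_charP AlgInt Nat.prime_two
  obtain ⟨S, P, hS, hFS, hP⟩ := exists_family_traceSumCube h3
  set O := (finite_range_traceSumCube h3).toFinset
  have hO (f : ℍ → ℂ) : f ∈ O ↔ f ∈ Set.range (traceSumCube t) := Set.Finite.mem_toFinset _
  have hPF : (P (traceSumCube t 1)).map φ = (traceSeries t).map (Int.castRingHom k) ^ 3 :=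
    map_eq_map_traceSeries_pow_three φ (hP _ ⟨1, rfl⟩).1
  have hFB : traceSumCube t 1 ∈ O.filter fun f ↦ (P f).map φ ≠ 0 :=
    mem_filter.2 ⟨(hO _).2 ⟨1, rfl⟩,
      hPF ▸ pow_ne_zero 3 (map_traceSeries_ne_zero hco hδt hδ hm)⟩
  have hF : (3 * (t ^ 2 + 24 * (t * m + δ) - 1) : ℕ) ≤
      ((P (traceSumCube t 1)).map φ).order := by
    rw [hPF, order_pow, Nat.cast_mul, nsmul_eq_mul]
    exact mul_le_mul_right (le_order_map_traceSeries hco hδt hδ hmin) _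
  have hle := le_card_mul_of_sum_le hFB hFS hF (fun f hf hfS ↦ ?_)
    (sum_order_le φ (N := 3 * t) (M := 3 * t ^ 2) (mul_ne_zero three_ne_zero (NeZero.ne t))
      (fun f hf γ ↦ ?_) (fun f hf z ↦ ?_) fun f ↦ mem_filter)
  · have : t ^ 2 + 24 * (t * m + δ) - 1 ≤ (radical t + 1) * t ^ 2 := by
      linarith [hle.trans (Nat.mul_le_mul_right _ hS)]
    rw [add_mul, one_mul, mul_comm (radical t)] at this
    omega
  · rw [order_eq_emultiplicity_X]
    have := map_dvd (PowerSeries.map φ) ((hP f ((hO f).1 (mem_filter.1 hf).1)).2 hfS)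
    rw [map_pow, map_X] at this
    exact le_emultiplicity_of_pow_dvd this
  · obtain ⟨γ', rfl⟩ := (hO f).1 hf
    refine (hO _).2 ⟨γ' * γ, funext fun z ↦ ?_⟩
    rw [traceSumCube, traceSumCube, mul_smul]
  · exact_mod_cast (hP f ((hO f).1 hf)).1 z

end PartitionParity

/-- For t coprime to 6 and 0 < δ_t < t with 24δ_t ≡ 1 (mod t): if some
p(tm + δ_t) is odd then the smallest such m satisfies
m < (t/24)·∏_{p ∣ t prime} p, i.e. 24m < t·∏_{p ∣ t prime} p. -/
theorem smallest_odd_bound_general (t δ : ℕ) (ht : 0 < t)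
    (hco : Nat.Coprime t 6) (hδ0 : 0 < δ) (hδt : δ < t)
    (hδ : 24 * δ % t = 1 % t)
    (h : ∃ m : ℕ, Odd (partitionFn (t * m + δ))) :
    ∃ m : ℕ, Odd (partitionFn (t * m + δ)) ∧
      (∀ m' : ℕ, Odd (partitionFn (t * m' + δ)) → m ≤ m') ∧
      24 * m < t * ∏ p ∈ t.primeFactors, p := by
  classical
  have : NeZero t := ⟨ht.ne'⟩
  refine ⟨Nat.find h, Nat.find_spec h, fun m' ↦ Nat.find_min' h, ?_⟩
  have hle : 24 * (t * Nat.find h + δ) ≤ t ^ 2 * ∏ p ∈ t.primeFactors, p + 1 :=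
    Nat.radical_eq_prod_primeFactors (n := t) ▸
      PartitionParity.twenty_four_mul_le hco hδt hδ (Nat.find_spec h) fun m' ↦ Nat.find_min' h
  exact Nat.lt_of_mul_lt_mul_left (a := t) (by nlinarith)
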